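/- arXiv:1810.00915 — 3 statements merged into one kernel-verified Lean document; each statement's English description precedes it below -/
import Mathlib

section
/- Let n, k, s be positive integers with n ≥ 2k² and k ≥ 3s. Then any family F of k-element subsets of [n] with matching number ν(F) ≤ s satisfies δ_1(F) ≤ C(n-1, k-1) - C(n-s-1, k-1). -/
/-- averaging over permutations, whole type -/
lemma avg_univ {α : Type*} [Fintype α] [DecidableEq α] (m κ W : ℕ) (φ : Finset α → ℕ)
    (hm : m * κ ≤ Fintype.card α)
    (h : ∀ B : Fin m → Finset α, (∀ j, (B j).card = κ) → (∀ i j, i ≠ j → Disjoint (B i) (B j)) →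
      ∑ j, φ (B j) ≤ W) :
    m * ∑ A ∈ Finset.powersetCard κ (Finset.univ : Finset α), φ A
      ≤ W * (Fintype.card α).choose κ := by
  classical
  have key : ∀ B : Finset α, B.card = κ →
      (∑ σ : Equiv.Perm α, φ (B.map σ.toEmbedding)) * (Fintype.card α).choose κ
      = Fintype.card (Equiv.Perm α) * ∑ A ∈ Finset.powersetCard κ (Finset.univ : Finset α), φ A := by
    intro B hB
    have h1 : ∀ A ∈ Finset.powersetCard κ (Finset.univ : Finset α),
        ∑ σ : Equiv.Perm α, φ (A.map σ.toEmbedding) = ∑ σ : Equiv.Perm α, φ (B.map σ.toEmbedding) := by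
      intro A hA
      have hA' : A.card = κ := (Finset.mem_powersetCard.1 hA).2
      obtain ⟨τ, hτ⟩ : ∃ τ : Equiv.Perm α, B.map τ.toEmbedding = A := by
        have e : {x // x ∈ B} ≃ {x // x ∈ A} := Finset.equivOfCardEq (by rw [hA', hB])
        refine ⟨e.extendSubtype, ?_⟩
        apply Finset.eq_of_subset_of_card_le
        · intro y hy
          rw [Finset.mem_map] at hy
          obtain ⟨x, hx, rfl⟩ := hy
          exact e.extendSubtype_mem x hx
        · rw [Finset.card_map, hA', hB]
      rw [← hτ, ← Equiv.sum_comp (Equiv.mulRight τ) (fun σ : Equiv.Perm α => φ (B.map σ.toEmbedding))]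
      apply Finset.sum_congr rfl
      intro σ _
      rw [Finset.map_map]
      rfl
    have h2 : ∀ σ : Equiv.Perm α,
        ∑ A ∈ Finset.powersetCard κ (Finset.univ : Finset α), φ (A.map σ.toEmbedding)
        = ∑ A ∈ Finset.powersetCard κ (Finset.univ : Finset α), φ A := by
      intro σ
      have := Finset.powersetCard_map σ.toEmbedding κ Finset.univ
      rw [Finset.map_univ_equiv] at this
      conv_rhs => rw [this]
      rw [Finset.sum_map]
      rfl
    have h3 := Finset.sum_congr rfl h1
    rw [Finset.sum_comm, Finset.sum_congr rfl (fun σ _ => h2 σ)] at h3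
    simp only [Finset.sum_const, smul_eq_mul, Finset.card_powersetCard, Finset.card_univ] at h3
    rw [h3, mul_comm]
  -- base blocks
  obtain ⟨e⟩ : Nonempty (Fin m × Fin κ ↪ α) := by
    apply Function.Embedding.nonempty_of_card_le
    simpa using hm
  let B0 : Fin m → Finset α := fun j => Finset.univ.image (fun t => e (j, t))
  have hB0 : ∀ j, (B0 j).card = κ := by
    intro j
    simp only [B0]
    rw [Finset.card_image_of_injective]
    · simp
    · intro a b hab
      simpa using hab
  have hd : ∀ i j, i ≠ j → Disjoint (B0 i) (B0 j) := by
    intro i j hij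
    rw [Finset.disjoint_left]
    intro x hx hy
    simp only [B0, Finset.mem_image, Finset.mem_univ, true_and] at hx hy
    obtain ⟨a, rfl⟩ := hx
    obtain ⟨b, hb⟩ := hy
    have := e.injective hb
    simp at this
    exact hij this.1.symm
  have hσ : ∑ σ : Equiv.Perm α, ∑ j, φ ((B0 j).map σ.toEmbedding) ≤ Fintype.card (Equiv.Perm α) * W := by
    calc _ ≤ ∑ σ : Equiv.Perm α, W := by
          apply Finset.sum_le_sum
          intro σ _
          apply h (fun j => (B0 j).map σ.toEmbedding)
          · intro j; rw [Finset.card_map, hB0]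
          · intro i j hij; exact (Finset.disjoint_map _).2 (hd i j hij)
      _ = _ := by simp
  rw [Finset.sum_comm] at hσ
  have h5 := Nat.mul_le_mul_right ((Fintype.card α).choose κ) hσ
  rw [Finset.sum_mul, Finset.sum_congr rfl (fun j _ => key (B0 j) (hB0 j))] at h5
  simp only [Finset.sum_const, smul_eq_mul, Finset.card_univ, Fintype.card_fin] at h5
  have hpos : 0 < Fintype.card (Equiv.Perm α) := Fintype.card_pos
  apply Nat.le_of_mul_le_mul_left _ hpos
  calc _ = _ := by ring
    _ ≤ _ := h5
    _ = _ := by ring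

lemma avg_set {α : Type*} [DecidableEq α] (Y : Finset α) (m κ W : ℕ) (φ : Finset α → ℕ)
    (hm : m * κ ≤ Y.card)
    (h : ∀ B : Fin m → Finset α, (∀ j, B j ⊆ Y ∧ (B j).card = κ) →
      (∀ i j, i ≠ j → Disjoint (B i) (B j)) → ∑ j, φ (B j) ≤ W) :
    m * ∑ A ∈ Finset.powersetCard κ Y, φ A ≤ W * Y.card.choose κ := by
  have := avg_univ (α := {x // x ∈ Y}) m κ W (fun A => φ (A.map (Function.Embedding.subtype _)))
    (by simpa using hm) (by
      intro B hB hd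
      apply h (fun j => (B j).map (Function.Embedding.subtype _))
      · intro j
        refine ⟨?_, by rw [Finset.card_map, hB]⟩
        intro x hx
        simp at hx
        exact hx.1
      · intro i j hij; exact (Finset.disjoint_map _).2 (hd i j hij))
  have h2 := Finset.powersetCard_map (Function.Embedding.subtype (fun x => x ∈ Y)) κ Finset.univ
  have h3 : (Finset.univ : Finset {x // x ∈ Y}).map (Function.Embedding.subtype (fun x => x ∈ Y)) = Y := by
    ext x; simp
  rw [h3] at h2
  rw [h2, Finset.sum_map]
  simpa using this

lemma greedy {α : Type*} [DecidableEq α] (m q : ℕ) (D : Fin m → Finset α)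
    (h : ∀ (p : Fin q → Fin m) (x : Fin q → α), Function.Injective p → Function.Injective x →
      (∀ j, x j ∈ D (p j)) → False) :
    ∃ j < q, (Finset.univ.filter (fun p => j < (D p).card)).card + j + 1 ≤ q := by
  by_contra hcon
  push Not at hcon
  obtain ⟨p, hp, hpm⟩ := (Finset.all_card_le_biUnion_card_iff_exists_injective
    (fun j : Fin q => Finset.univ.filter (fun p => (j : ℕ) < (D p).card))).1 (by
      intro S
      rcases S.eq_empty_or_nonempty with rfl | hS
      · simp
      have h0 := S.min'_mem hS
      have h1 := hcon (S.min' hS) (S.min' hS).2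
      have h2 : S.card ≤ q - (S.min' hS : ℕ) := by
        have : S ⊆ Finset.Ici (S.min' hS) := fun y hy => Finset.mem_Ici.2 (S.min'_le y hy)
        have := Finset.card_le_card this
        simpa using this
      have h3 := Finset.card_le_card (Finset.subset_biUnion_of_mem
        (fun j : Fin q => Finset.univ.filter (fun p => (j : ℕ) < (D p).card)) h0)
      omega)
  obtain ⟨x, hx, hxm⟩ := (Finset.all_card_le_biUnion_card_iff_exists_injective
    (fun j : Fin q => D (p j))).1 (by
      intro S
      rcases S.eq_empty_or_nonempty with rfl | hS
      · simp
      have h0 := S.max'_mem hS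
      have h1 := hpm (S.max' hS)
      simp only [Finset.mem_filter, Finset.mem_univ, true_and] at h1
      have h2 : S.card ≤ (S.max' hS : ℕ) + 1 := by
        have : S ⊆ Finset.Iic (S.max' hS) := fun y hy => Finset.mem_Iic.2 (S.le_max' y hy)
        have := Finset.card_le_card this
        simpa using this
      have h3 := Finset.card_le_card (Finset.subset_biUnion_of_mem
        (fun j : Fin q => D (p j)) h0)
      omega)
  exact h p x hp hx hxm

lemma greedy_sum {α : Type*} [DecidableEq α] (m q : ℕ) (D : Fin m → Finset α) (φ : Fin m → ℕ)
    (h : ∀ (p : Fin q → Fin m) (x : Fin q → α), Function.Injective p → Function.Injective x →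
      (∀ j, x j ∈ D (p j)) → False)
    (h1 : ∀ p, φ p ≤ m) (h2 : ∀ p, (D p).card < q → φ p ≤ (D p).card) :
    ∑ p, φ p ≤ (q - 1) * m := by
  obtain ⟨j, hj, hc⟩ := greedy m q D h
  have : ∀ p ∈ Finset.univ, φ p ≤ j + if j < (D p).card then m else 0 := by
    intro p _
    split_ifs with hp
    · have := h1 p; omega
    · have := h2 p (by omega); omega
  calc _ ≤ _ := Finset.sum_le_sum this
    _ = m * j + (Finset.univ.filter (fun p => j < (D p).card)).card * m := by
      rw [Finset.sum_add_distrib, ← Finset.sum_filter]; simp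
    _ = ((Finset.univ.filter (fun p => j < (D p).card)).card + j) * m := by ring
    _ ≤ _ := Nat.mul_le_mul_right _ (by omega)


def NoM {α : Type*} (s : ℕ) (F : Finset (Finset α)) : Prop :=
  ∀ f : Fin (s + 1) → Finset α, (∀ i, f i ∈ F) → (∀ i j, i ≠ j → Disjoint (f i) (f j)) → False

def Stab {α : Type*} [DecidableEq α] (i j : α) (F : Finset (Finset α)) : Prop :=
  ∀ A ∈ F, j ∈ A → i ∉ A → insert i (A.erase j) ∈ F

def shiftSet {α : Type*} [DecidableEq α] (i j : α) (F : Finset (Finset α)) (A : Finset α) : Finset α :=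
  if j ∈ A ∧ i ∉ A ∧ insert i (A.erase j) ∉ F then insert i (A.erase j) else A

def shiftFam {α : Type*} [DecidableEq α] (i j : α) (F : Finset (Finset α)) : Finset (Finset α) :=
  F.image (shiftSet i j F)

section
variable {α : Type*} [DecidableEq α]

lemma unswap {i j : α} {A : Finset α} (hj : j ∈ A) (hi : i ∉ A) :
    insert j ((insert i (A.erase j)).erase i) = A := by
  grind

lemma shift_cases {i j : α} {F : Finset (Finset α)} {A : Finset α}
    (hA : A ∈ shiftFam i j F) :
    (A ∈ F ∧ (j ∈ A → i ∉ A → insert i (A.erase j) ∈ F)) ∨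
    (A ∉ F ∧ i ∈ A ∧ j ∉ A ∧ insert j (A.erase i) ∈ F) := by
  obtain ⟨B, hB, rfl⟩ := Finset.mem_image.1 hA
  unfold shiftSet
  split_ifs with h
  · right
    refine ⟨h.2.2, by simp, ?_, ?_⟩
    · have : i ≠ j := by rintro rfl; exact h.2.1 h.1
      simp [this.symm]
    · rw [unswap h.1 h.2.1]; exact hB
  · left
    refine ⟨hB, fun h1 h2 => ?_⟩
    by_contra h3
    exact h ⟨h1, h2, h3⟩

lemma shift_card (i j : α) (F : Finset (Finset α)) : (shiftFam i j F).card = F.card := by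
  apply Finset.card_image_of_injOn
  intro A hA B hB hAB
  simp only [shiftSet] at hAB
  split_ifs at hAB with h1 h2 h2
  · rw [← unswap h1.1 h1.2.1, hAB, unswap h2.1 h2.2.1]
  · exact absurd (hAB ▸ hB) h1.2.2
  · exact absurd (hAB ▸ hA) h2.2.2
  · exact hAB

lemma shift_sized {i j : α} {F : Finset (Finset α)} {k : ℕ} (h : ∀ A ∈ F, A.card = k) :
    ∀ A ∈ shiftFam i j F, A.card = k := by
  intro A hA
  obtain ⟨B, hB, rfl⟩ := Finset.mem_image.1 hA
  unfold shiftSet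
  split_ifs with h'
  · rw [Finset.card_insert_of_notMem (by simp [h'.2.1]), Finset.card_erase_of_mem h'.1, h B hB]
    have := Finset.card_pos.2 ⟨j, h'.1⟩
    have := h B hB
    omega
  · exact h B hB

lemma shift_noM {i j : α} {s : ℕ} {F : Finset (Finset α)} (h : NoM s F) :
    NoM s (shiftFam i j F) := by
  intro f hf hd
  by_cases hall : ∀ p, f p ∈ F
  · exact h f hall hd
  push Not at hall
  obtain ⟨p, hp⟩ := hall
  have hp' := (shift_cases (hf p)).resolve_left (fun h => hp h.1)
  have hij : i ≠ j := by rintro rfl; exact hp'.2.2.1 hp'.2.1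
  have hpi : ∀ q, q ≠ p → i ∉ f q := by
    intro q hq hi
    exact Finset.disjoint_left.1 (hd q p hq) hi hp'.2.1
  refine h (fun q => (f q).map (Equiv.swap i j).toEmbedding) ?_ ?_
  · intro q
    by_cases hq : q = p
    · subst hq
      convert hp'.2.2.2 using 1
      ext x
      have := hp'.2.1
      have := hp'.2.2.1
      simp only [Finset.mem_map_equiv, Equiv.symm_swap, Finset.mem_insert, Finset.mem_erase]
      rw [Equiv.swap_apply_def]
      grind
    · have hi := hpi q hq
      rcases shift_cases (hf q) with h1 | h1
      · by_cases hj : j ∈ f q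
        · convert h1.2 hj hi using 1
          ext x
          simp only [Finset.mem_map_equiv, Equiv.symm_swap, Finset.mem_insert, Finset.mem_erase]
          rw [Equiv.swap_apply_def]
          grind
        · convert h1.1 using 1
          ext x
          simp only [Finset.mem_map_equiv, Equiv.symm_swap]
          rw [Equiv.swap_apply_def]
          grind
      · exact absurd h1.2.1 hi
  · intro q r hqr
    exact (Finset.disjoint_map _).2 (hd q r hqr)

end

def famWt {n : ℕ} (F : Finset (Finset (Fin n))) : ℕ := ∑ A ∈ F, ∑ a ∈ A, (a : ℕ)

lemma wt_insert {n : ℕ} {i j : Fin n} {A : Finset (Fin n)} (hj : j ∈ A) (hi : i ∉ A) (hij : i < j) :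
    ∑ a ∈ insert i (A.erase j), (a : ℕ) < ∑ a ∈ A, (a : ℕ) := by
  rw [Finset.sum_insert (by simp [hi]), ← Finset.add_sum_erase A (fun a => (a : ℕ)) hj]
  have : (i : ℕ) < j := hij
  omega

lemma shift_wt {n : ℕ} {i j : Fin n} (hij : i < j) {F : Finset (Finset (Fin n))}
    (h : ¬ Stab i j F) : famWt (shiftFam i j F) < famWt F := by
  unfold Stab at h
  push Not at h
  obtain ⟨A, hA, hj, hi, hn⟩ := h
  have h1 : famWt (shiftFam i j F) ≤ ∑ A ∈ F, ∑ a ∈ shiftSet i j F A, (a : ℕ) := by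
    unfold famWt shiftFam
    exact Finset.sum_image_le_of_nonneg (fun _ _ => Nat.zero_le _)
  refine lt_of_le_of_lt h1 ?_
  apply Finset.sum_lt_sum
  · intro B hB
    unfold shiftSet
    split_ifs with h'
    · exact (wt_insert h'.1 h'.2.1 hij).le
    · exact le_rfl
  · refine ⟨A, hA, ?_⟩
    unfold shiftSet
    rw [if_pos ⟨hj, hi, hn⟩]
    exact wt_insert hj hi hij

lemma exists_min {n : ℕ} (P : Finset (Finset (Fin n)) → Prop) (F0) (h0 : P F0) :
    ∃ F, P F ∧ ∀ i j, i < j → Stab i j F ∨ ¬ P (shiftFam i j F) := by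
  induction hw : famWt F0 using Nat.strong_induction_on generalizing F0 with
  | _ w ih =>
    by_cases h : ∀ i j, i < j → Stab i j F0 ∨ ¬ P (shiftFam i j F0)
    · exact ⟨F0, h0, h⟩
    · push Not at h
      obtain ⟨i, j, hij, hs, hP⟩ := h
      exact ih _ (hw ▸ shift_wt hij hs) _ hP rfl

/-- compress the part of `A` inside `W` to an initial segment `Z` of `W`. -/
lemma initial {n : ℕ} (F : Finset (Finset (Fin n))) (W Z : Finset (Fin n))
    (hS : ∀ i ∈ W, ∀ j ∈ W, i < j → Stab i j F) (hZW : Z ⊆ W)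
    (hZ : ∀ z ∈ Z, ∀ w ∈ W, w ∉ Z → z < w) (A : Finset (Fin n)) (hA : A ∈ F)
    (hc : (A ∩ W).card = Z.card) : (A \ W) ∪ Z ∈ F := by
  induction hw : ∑ a ∈ A, (a : ℕ) using Nat.strong_induction_on generalizing A with
  | _ w ih =>
    by_cases h : A ∩ W = Z
    · rw [← h]
      have : A \ W ∪ A ∩ W = A := by grind
      rwa [this]
    · obtain ⟨i, hi, hiA⟩ : ∃ i ∈ Z, i ∉ A ∩ W := by
        by_contra hcon
        push Not at hcon
        exact h (Finset.eq_of_subset_of_card_le hcon hc.le).symm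
      obtain ⟨j, hj, hjZ⟩ : ∃ j ∈ A ∩ W, j ∉ Z := by
        by_contra hcon
        push Not at hcon
        exact h (Finset.eq_of_subset_of_card_le hcon hc.ge)
      have hiW := hZW hi
      have hjW := (Finset.mem_inter.1 hj).2
      have hjA := (Finset.mem_inter.1 hj).1
      have hiA' : i ∉ A := fun h => hiA (Finset.mem_inter.2 ⟨h, hiW⟩)
      have hij := hZ i hi j hjW hjZ
      have h1 := hS i hiW j hjW hij A hA hjA hiA'
      have h2 := ih _ (hw ▸ wt_insert hjA hiA' hij) _ h1 (by
        have : (insert i (A.erase j)) ∩ W = insert i ((A ∩ W).erase j) := by grind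
        rw [this, Finset.card_insert_of_notMem (by simp [hiA']), Finset.card_erase_of_mem hj, hc]
        have := Finset.card_pos.2 ⟨j, hj⟩
        omega) rfl
      have : (insert i (A.erase j)) \ W = A \ W := by grind
      rwa [this] at h2


open Finset FinsetFamily in
lemma shadow_small {α : Type*} [DecidableEq α] (W : Finset α) (k s : ℕ) (hk : 1 ≤ k)
    (H : Finset (Finset α)) (hH : ∀ A ∈ H, A ⊆ W ∧ A.card = k) (hW : W.card + 1 ≤ (s + 1) * k) :
    H.card ≤ s * (∂ H).card := by
  have := Finset.card_mul_le_card_mul (s := H) (t := ∂ H) (fun A B => B ⊆ A) (m := k) (n := s * k)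
    (by
      intro A hA
      calc k = (A.image (fun a => A.erase a)).card := by
            rw [Finset.card_image_of_injOn, (hH A hA).2]
            exact Finset.erase_injOn A
        _ ≤ _ := by
            apply Finset.card_le_card
            intro B hB
            obtain ⟨a, ha, rfl⟩ := Finset.mem_image.1 hB
            rw [Finset.mem_bipartiteAbove]
            exact ⟨Finset.erase_mem_shadow hA ha, Finset.erase_subset _ _⟩)
    (by
      intro B hB
      obtain ⟨A0, hA0, a0, ha0, rfl⟩ := Finset.mem_shadow_iff.1 hB
      set B := A0.erase a0
      have hBc : B.card = k - 1 := by
        rw [Finset.card_erase_of_mem ha0, (hH A0 hA0).2]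
      have hBW : B ⊆ W := (Finset.erase_subset _ _).trans (hH A0 hA0).1
      calc _ ≤ ((W \ B).image (fun a => insert a B)).card := by
            apply Finset.card_le_card
            intro A hA
            rw [Finset.mem_bipartiteBelow] at hA
            obtain ⟨hAH, hBA⟩ := hA
            have h1 : (A \ B).card = 1 := by
              rw [Finset.card_sdiff_of_subset hBA, hBc, (hH A hAH).2]; omega
            obtain ⟨a, ha⟩ := Finset.card_eq_one.1 h1
            have ha' : a ∈ A \ B := by rw [ha]; simp
            rw [Finset.mem_sdiff] at ha'
            refine Finset.mem_image.2 ⟨a, Finset.mem_sdiff.2 ⟨(hH A hAH).1 ha'.1, ha'.2⟩, ?_⟩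
            rw [Finset.insert_eq, ← ha, Finset.sdiff_union_of_subset hBA]
        _ ≤ (W \ B).card := Finset.card_image_le
        _ = W.card - (k - 1) := by rw [Finset.card_sdiff_of_subset hBW, hBc]
        _ ≤ s * k := by
          have : (s + 1) * k = s * k + k := by ring
          omega)
  apply Nat.le_of_mul_le_mul_right _ (show 0 < k by omega)
  calc _ ≤ _ := this
    _ = _ := by ring

open Finset FinsetFamily in
lemma shadow_one {α : Type*} [DecidableEq α] (s : ℕ)
    (H : Finset (Finset α)) (hH : ∀ A ∈ H, A.card = 1) (hν : NoM s H) :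
    H.card ≤ s * (∂ H).card := by
  rcases H.eq_empty_or_nonempty with rfl | ⟨A, hA⟩
  · simp
  have h1 : H.card ≤ s := by
    by_contra hcon
    push Not at hcon
    obtain ⟨e⟩ : Nonempty (Fin (s+1) ↪ {x // x ∈ H}) := by
      apply Function.Embedding.nonempty_of_card_le
      simpa using hcon
    refine hν (fun i => e i) (fun i => (e i).2) ?_
    intro i j hij
    obtain ⟨a, ha⟩ := Finset.card_eq_one.1 (hH _ (e i).2)
    obtain ⟨b, hb⟩ := Finset.card_eq_one.1 (hH _ (e j).2)
    rw [ha, hb, Finset.disjoint_singleton]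
    rintro rfl
    exact hij (e.injective (Subtype.ext (ha.trans hb.symm)))
  obtain ⟨a, rfl⟩ := Finset.card_eq_one.1 (hH A hA)
  have h2 : 0 < (∂ H).card := Finset.card_pos.2 ⟨_, Finset.erase_mem_shadow hA (by simp : a ∈ ({a} : Finset α))⟩
  nlinarith

open Finset FinsetFamily in
lemma shadow_bound {α : Type*} [LinearOrder α] (s : ℕ) (W : Finset α) : ∀ (k : ℕ) (_ : 1 ≤ k)
    (H : Finset (Finset α)) (_ : ∀ A ∈ H, A ⊆ W ∧ A.card = k)
    (_ : ∀ i ∈ W, ∀ j ∈ W, i < j → Stab i j H) (_ : NoM s H),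
    H.card ≤ s * (∂ H).card := by
  induction W using Finset.induction_on_max with
  | empty =>
    intro k hk H hH _ _
    have : H = ∅ := by
      apply Finset.eq_empty_of_forall_notMem
      intro A hA
      have := hH A hA
      have h2 := Finset.card_le_card this.1
      simp at h2
      rw [h2] at this
      simp at this
      omega
    simp [this]
  | insert a W ha ih =>
    intro k hk H hH hS hν
    have haW : a ∉ W := fun h => lt_irrefl _ (ha a h)
    rcases hk.eq_or_lt with rfl | hk1
    · exact shadow_one s H (fun A hA => (hH A hA).2) hν
    by_cases hW : (insert a W).card + 1 ≤ (s + 1) * k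
    · exact shadow_small _ k s hk H hH hW
    set H0 := H.filter (fun A => a ∉ A) with hH0
    set H1 := (H.filter (fun A => a ∈ A)).image (fun A => A.erase a) with hH1
    have mem1 : ∀ B, B ∈ H1 ↔ a ∉ B ∧ insert a B ∈ H := by
      intro B
      simp only [hH1, Finset.mem_image, Finset.mem_filter]
      constructor
      · rintro ⟨A, ⟨hA, haA⟩, rfl⟩
        simp [Finset.insert_erase haA, hA]
      · rintro ⟨h1, h2⟩
        exact ⟨_, ⟨h2, by simp⟩, by simp [h1]⟩
    have c1 : H1.card = (H.filter (fun A => a ∈ A)).card := by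
      apply Finset.card_image_of_injOn
      intro A hA B hB hAB
      rw [Finset.mem_coe, Finset.mem_filter] at hA hB
      simp only at hAB
      rw [← Finset.insert_erase hA.2, hAB, Finset.insert_erase hB.2]
    have cs : H0.card + H1.card = H.card := by
      rw [c1, add_comm, hH0]
      exact Finset.card_filter_add_card_filter_not _
    have b0 : H0.card ≤ s * (∂ H0).card := by
      apply ih k hk H0
      · intro A hA
        rw [hH0, Finset.mem_filter] at hA
        refine ⟨?_, (hH A hA.1).2⟩
        exact (Finset.subset_insert_iff_of_notMem hA.2).1 (hH A hA.1).1
      · intro i hi j hj hij A hA hjA hiA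
        rw [hH0, Finset.mem_filter] at hA ⊢
        refine ⟨hS i (Finset.mem_insert_of_mem hi) j (Finset.mem_insert_of_mem hj) hij A hA.1 hjA hiA, ?_⟩
        have : a ≠ i := fun h => haW (h ▸ hi)
        simp [this, hA.2]
      · intro f hf hd
        exact hν f (fun i => (Finset.mem_filter.1 (hf i)).1) hd
    have b1 : H1.card ≤ s * (∂ H1).card := by
      apply ih (k - 1) (by omega) H1
      · intro A hA
        rw [mem1] at hA
        have := hH _ hA.2
        rw [Finset.card_insert_of_notMem hA.1] at this
        refine ⟨?_, by omega⟩
        intro x hx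
        have := this.1 (Finset.mem_insert_of_mem hx)
        rcases Finset.mem_insert.1 this with rfl | h
        · exact absurd hx hA.1
        · exact h
      · intro i hi j hj hij A hA hjA hiA
        rw [mem1] at hA ⊢
        have hai : a ≠ i := fun h => haW (h ▸ hi)
        have haj : a ≠ j := fun h => haW (h ▸ hj)
        refine ⟨by simp [hai, hA.1], ?_⟩
        have := hS i (Finset.mem_insert_of_mem hi) j (Finset.mem_insert_of_mem hj) hij _ hA.2
          (by simp [hjA]) (by simp [hiA, hai.symm])
        convert this using 1
        grind
      · intro f hf hd
        have hcU : (Finset.univ.biUnion f).card ≤ (s + 1) * (k - 1) := by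
          calc _ ≤ ∑ i, (f i).card := Finset.card_biUnion_le
            _ = ∑ i : Fin (s+1), (k - 1) := by
              apply Finset.sum_congr rfl
              intro i _
              have h := (mem1 _).1 (hf i)
              have := (hH _ h.2).2
              rw [Finset.card_insert_of_notMem h.1] at this
              omega
            _ = _ := by simp
        have hV : s + 1 ≤ ((insert a W) \ Finset.univ.biUnion f).card := by
          have := Finset.le_card_sdiff (Finset.univ.biUnion f) (insert a W)
          have h3 : (s + 1) * k = (s + 1) * (k - 1) + (s + 1) := by
            obtain ⟨k', rfl⟩ : ∃ k', k = k' + 1 := ⟨k - 1, by omega⟩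
            simp; ring
          omega
        obtain ⟨e⟩ : Nonempty (Fin (s+1) ↪ {x // x ∈ (insert a W) \ Finset.univ.biUnion f}) := by
          apply Function.Embedding.nonempty_of_card_le
          simpa using hV
        have he : ∀ i, (e i : α) ∈ insert a W ∧ ∀ j, (e i : α) ∉ f j := by
          intro i
          have := (e i).2
          rw [Finset.mem_sdiff] at this
          refine ⟨this.1, fun j hj => this.2 (Finset.mem_biUnion.2 ⟨j, Finset.mem_univ _, hj⟩)⟩
        refine hν (fun i => insert (e i : α) (f i)) ?_ ?_
        · intro i
          have h := (mem1 _).1 (hf i)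
          by_cases hai : (e i : α) = a
          · rw [hai]; exact h.2
          · have hW' : (e i : α) ∈ W := (Finset.mem_insert.1 (he i).1).resolve_left hai
            have := hS _ (he i).1 a (Finset.mem_insert_self _ _) (ha _ hW') _ h.2 (by simp)
              (by simp [hai, (he i).2 i])
            rwa [Finset.erase_insert h.1] at this
        · intro i j hij
          have h1 : (e i : α) ≠ e j := fun h => hij (e.injective (Subtype.ext h))
          simp only [Finset.disjoint_insert_left, Finset.disjoint_insert_right, Finset.mem_insert]
          refine ⟨?_, (he i).2 j, hd i j hij⟩
          rintro (h | h)
          · exact h1 h.symm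
          · exact (he j).2 i h
    have sh : (∂ H0).card + (∂ H1).card ≤ (∂ H).card := by
      have n0 : ∀ B ∈ ∂ H0, a ∉ B := by
        intro B hB
        obtain ⟨A, hA, hBA⟩ := Finset.exists_subset_of_mem_shadow hB
        exact fun h => (Finset.mem_filter.1 hA).2 (hBA h)
      have n1 : ∀ B ∈ ∂ H1, a ∉ B := by
        intro B hB
        obtain ⟨A, hA, hBA⟩ := Finset.exists_subset_of_mem_shadow hB
        exact fun h => ((mem1 _).1 hA).1 (hBA h)
      have ci : ((∂ H1).image (insert a)).card = (∂ H1).card := by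
        apply Finset.card_image_of_injOn
        intro A hA B hB hAB
        rw [← Finset.erase_insert (n1 A hA), hAB, Finset.erase_insert (n1 B hB)]
      rw [← ci, ← Finset.card_union_of_disjoint]
      · apply Finset.card_le_card
        apply Finset.union_subset
        · exact Finset.shadow_mono (Finset.filter_subset _ _)
        · intro C hC
          obtain ⟨B, hB, rfl⟩ := Finset.mem_image.1 hC
          obtain ⟨A, hA, x, hx, rfl⟩ := Finset.mem_shadow_iff.1 hB
          rw [mem1] at hA
          have hax : a ≠ x := fun h => hA.1 (h ▸ hx)
          rw [← Finset.erase_insert_of_ne hax]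
          exact Finset.erase_mem_shadow hA.2 (by simp [hx])
      · rw [Finset.disjoint_left]
        intro C hC hC'
        obtain ⟨B, hB, rfl⟩ := Finset.mem_image.1 hC'
        exact n0 _ hC (by simp)
    calc H.card = H0.card + H1.card := cs.symm
      _ ≤ s * (∂ H0).card + s * (∂ H1).card := add_le_add b0 b1
      _ = s * ((∂ H0).card + (∂ H1).card) := by ring
      _ ≤ _ := Nat.mul_le_mul_left _ sh


lemma choose_diff (κ : ℕ) (N q : ℕ) (h : q ≤ N) :
    N.choose (κ + 1) ≤ (N - q).choose (κ + 1) + q * (N - 1).choose κ := by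
  induction q with
  | zero => simp
  | succ q ih =>
    have h1 := ih (by omega)
    obtain ⟨r, hr⟩ : ∃ r, N - q = r + 1 := ⟨N - q - 1, by omega⟩
    have h2 : N - (q + 1) = r := by omega
    rw [hr, Nat.choose_succ_succ] at h1
    rw [h2]
    have h3 : r.choose κ ≤ (N - 1).choose κ := Nat.choose_le_choose κ (by omega)
    have h4 : (q + 1) * (N - 1).choose κ = q * (N - 1).choose κ + (N - 1).choose κ := by ring
    simp only [Nat.succ_eq_add_one] at h1
    omega

lemma choose_half (κ N : ℕ) (hκ : 1 ≤ κ) (h : 2 * κ ^ 2 ≤ N) :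
    N.choose κ ≤ 2 * (N - κ).choose κ := by
  obtain ⟨c, rfl⟩ : ∃ c, κ = c + 1 := ⟨κ - 1, by omega⟩
  have hN : c + 1 ≤ N := by nlinarith
  have h1 := choose_diff c N (c + 1) hN
  obtain ⟨M, rfl⟩ : ∃ M, N = M + 1 := ⟨N - 1, by omega⟩
  have h2 := Nat.add_one_mul_choose_eq M c
  simp only [Nat.succ_eq_add_one, Nat.add_sub_cancel] at h1 h2
  set a := (M + 1).choose (c + 1)
  set b := M.choose c
  set d := (M + 1 - (c + 1)).choose (c + 1)
  -- 2 (c+1) b ≤ a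
  have h3 : 2 * ((c + 1) * b) ≤ a := by
    have : (2 * (c + 1) ^ 2) * b ≤ (c + 1) * a := by
      calc _ ≤ (M + 1) * b := Nat.mul_le_mul_right _ h
        _ = _ := by rw [h2]; ring
    apply Nat.le_of_mul_le_mul_left _ (show 0 < c + 1 by omega)
    calc _ = _ := by ring
      _ ≤ _ := this
  omega

open Finset in
lemma count_bound (n k s : ℕ) (hk : 1 ≤ k) (hsn : s + 1 ≤ n) (F : Finset (Finset (Fin n)))
    (hcard : ∀ A ∈ F, A.card = k) (X : Finset (Fin n)) (hX : X.card = s + 1) :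
    F.card + s * (n - s - 1).choose (k - 1) + (n - s).choose k ≤
      n.choose k + ∑ B ∈ powersetCard (k - 1) Xᶜ, (X.filter (fun x => insert x B ∈ F)).card
        + (F.filter (fun A => Disjoint A X)).card := by
  classical
  have hY : (Xᶜ).card = n - s - 1 := by rw [card_compl, hX]; simp; omega
  set PY := powersetCard (k - 1) Xᶜ with hPY
  set e : Fin n × Finset (Fin n) → Finset (Fin n) := fun p => insert p.1 p.2 with he
  have hdis : ∀ p ∈ X ×ˢ PY, ∀ x ∈ X, x ∉ p.2 := by
    intro p hp x hx hxp
    rw [mem_product, hPY, mem_powersetCard] at hp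
    have := hp.2.1 hxp
    simp [hx] at this
  have einter : ∀ p ∈ X ×ˢ PY, e p ∩ X = {p.1} := by
    intro p hp
    have h1 := hdis p hp
    have h2 := (mem_product.1 hp).1
    ext y
    simp only [he, mem_inter, mem_insert, mem_singleton]
    constructor
    · rintro ⟨h | h, hy⟩
      · exact h
      · exact absurd h (h1 y hy)
    · rintro rfl; exact ⟨Or.inl rfl, h2⟩
  have einj : Set.InjOn e (X ×ˢ PY : Finset _) := by
    intro p hp q hq hpq
    have h1 := einter p hp
    have h2 := einter q hq
    rw [hpq, h2, singleton_inj] at h1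
    have h3 := hdis p hp p.1 (mem_product.1 hp).1
    have h4 := hdis q hq q.1 (mem_product.1 hq).1
    ext1
    · exact h1.symm
    · rw [← erase_insert h3, ← erase_insert h4, h1]
      congr 1
      simpa [he, h1] using hpq
  set F2 := F.filter (fun A => 2 ≤ (A ∩ X).card) with hF2
  set F1 := F.filter (fun A => (A ∩ X).card = 1) with hF1
  set F0 := F.filter (fun A => Disjoint A X) with hF0
  have hF : F.card ≤ F0.card + F1.card + F2.card := by
    calc F.card ≤ (F0 ∪ F1 ∪ F2).card := by
          apply card_le_card
          intro A hA
          simp only [hF0, hF1, hF2, mem_union, mem_filter, hA, true_and, disjoint_iff_inter_eq_empty,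
            ← card_eq_zero]
          omega
      _ ≤ _ := (card_union_le _ _).trans (Nat.add_le_add_right (card_union_le _ _) _)
  have hF1c : F1.card ≤ ∑ B ∈ PY, (X.filter (fun x => insert x B ∈ F)).card := by
    calc F1.card ≤ (((X ×ˢ PY).filter (fun p => e p ∈ F)).image e).card := by
          apply card_le_card
          intro A hA
          rw [hF1, mem_filter] at hA
          obtain ⟨x, hx⟩ := card_eq_one.1 hA.2
          have hxm : x ∈ A ∩ X := by rw [hx]; simp
          rw [mem_inter] at hxm
          refine mem_image.2 ⟨(x, A.erase x), ?_, insert_erase hxm.1⟩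
          simp only [mem_filter, mem_product, he, insert_erase hxm.1, hA.1, hxm.2, true_and, and_true]
          rw [hPY, mem_powersetCard]
          refine ⟨?_, by rw [card_erase_of_mem hxm.1, hcard A hA.1]⟩
          intro y hy
          rw [mem_erase] at hy
          rw [mem_compl]
          intro hyX
          have : y ∈ A ∩ X := mem_inter.2 ⟨hy.2, hyX⟩
          rw [hx, mem_singleton] at this
          exact hy.1 this
      _ ≤ _ := card_image_le
      _ = _ := by
        rw [card_filter, sum_product_right]
        simp only [card_filter, he]
  have hU : F2.card + (powersetCard k Xᶜ).card + ((X ×ˢ PY).image e).card ≤ (powersetCard k (univ : Finset (Fin n))).card := by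
    rw [← card_union_of_disjoint, ← card_union_of_disjoint]
    · apply card_le_card
      intro A hA
      rw [mem_powersetCard]
      refine ⟨subset_univ _, ?_⟩
      rw [mem_union, mem_union] at hA
      rcases hA with (hA | hA) | hA
      · exact hcard A (mem_filter.1 hA).1
      · exact (mem_powersetCard.1 hA).2
      · obtain ⟨p, hp, rfl⟩ := mem_image.1 hA
        have h1 := hdis p hp p.1 (mem_product.1 hp).1
        have h2 := (mem_powersetCard.1 (mem_product.1 hp).2).2
        simp only [he]
        rw [card_insert_of_notMem h1, h2]; omega
    · rw [disjoint_left]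
      intro A hA hA'
      obtain ⟨p, hp, rfl⟩ := mem_image.1 hA'
      have h1 := einter p hp
      rcases mem_union.1 hA with h | h
      · have := (mem_filter.1 h).2
        rw [h1] at this
        simp at this
      · have h2 := (mem_powersetCard.1 h).1
        have h3 : p.1 ∈ e p ∩ X := by rw [h1]; simp
        rw [mem_inter] at h3
        have := h2 h3.1
        simp [h3.2] at this
    · rw [disjoint_left]
      intro A hA hA'
      have h1 := (mem_filter.1 hA).2
      have h2 := (mem_powersetCard.1 hA').1
      have : A ∩ X = ∅ := by
        rw [← disjoint_iff_inter_eq_empty, disjoint_left]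
        intro x hx hx'
        have := h2 hx
        simp [hx'] at this
      rw [this] at h1
      simp at h1
  rw [card_image_of_injOn einj, card_product, hX, hPY, card_powersetCard, card_powersetCard,
    card_powersetCard, hY, card_univ, Fintype.card_fin] at hU
  have hpas : (n - s).choose k = (n - s - 1).choose (k - 1) + (n - s - 1).choose k := by
    obtain ⟨a, ha⟩ : ∃ a, n - s = a + 1 := ⟨n - s - 1, by omega⟩
    obtain ⟨b, rfl⟩ : ∃ b, k = b + 1 := ⟨k - 1, by omega⟩
    rw [ha, Nat.choose_succ_succ]
    simp
  have : (s + 1) * (n - s - 1).choose (k - 1) = s * (n - s - 1).choose (k - 1) + (n - s - 1).choose (k - 1) := by ring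
  omega

open Finset in
lemma core (n k s : ℕ) (hs : 0 < s) (hn : 2 * k ^ 2 ≤ n) (hk : 3 * s ≤ k)
    (F : Finset (Finset (Fin n))) (hcard : ∀ A ∈ F, A.card = k) (hν : NoM s F)
    (X Z : Finset (Fin n)) (hX : X.card = s + 1) (hZX : Z ⊆ Xᶜ) (hZc : Z.card = k - 1)
    (hZ : ∀ x ∈ X, insert x Z ∈ F)
    (hG : (F.filter (fun A => Disjoint A X)).card ≤
      s * ((powersetCard (k - 1) Xᶜ).filter (fun B => ∀ x ∈ X, insert x B ∈ F)).card) :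
    k * F.card + k * (n - s).choose k + s * (n - s - 1).choose (k - 1) ≤ k * n.choose k := by
  classical
  have hkk : 3 * k ≤ k ^ 2 := by nlinarith
  have hcb := count_bound n k s (by omega) (by omega) F hcard X hX
  have hY : (Xᶜ).card = n - s - 1 := by rw [card_compl, hX]; simp; omega
  set D : Finset (Fin n) → Finset (Fin n) := fun B => X.filter (fun x => insert x B ∈ F) with hD
  have hDle : ∀ B, (D B).card ≤ s + 1 := fun B => hX ▸ card_le_card (filter_subset _ _)
  have hDX : ∀ B x, x ∈ D B → x ∈ X ∧ insert x B ∈ F := fun B x h => mem_filter.1 h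
  have hmk : ∃ κ, k = κ + 1 := ⟨k - 1, by omega⟩
  -- disjointness of extended blocks
  have ext_disj : ∀ (x y : Fin n) (B C : Finset (Fin n)), x ∈ X → y ∈ X → B ⊆ Xᶜ → C ⊆ Xᶜ →
      x ≠ y → Disjoint B C → Disjoint (insert x B) (insert y C) := by
    intro x y B C hx hy hB hC hxy hd
    have h1 : x ∉ C := fun h => (mem_compl.1 (hC h)) hx
    have h2 : y ∉ B := fun h => (mem_compl.1 (hB h)) hy
    simp only [disjoint_insert_left, disjoint_insert_right, mem_insert]
    refine ⟨?_, ?_, hd⟩ <;> grind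
  set C := (n - s - 1).choose (k - 1) with hC
  set C' := (n - s - 1 - (k - 1)).choose (k - 1) with hC'
  set P := ∑ B ∈ powersetCard (k - 1) Xᶜ, min (D B).card s with hP
  set Q := ((powersetCard (k - 1) Xᶜ).filter (fun B => ∀ x ∈ X, insert x B ∈ F)).card with hQ
  have hQ' : Q = ∑ B ∈ powersetCard (k - 1) Xᶜ, if (D B).card = s + 1 then 1 else 0 := by
    rw [hQ, card_filter]
    apply sum_congr rfl
    intro B _
    congr 1
    rw [← hX, hD]
    simp only [card_filter_eq_iff]
  have hPQ : ∑ B ∈ powersetCard (k - 1) Xᶜ, (D B).card = P + Q := by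
    rw [hP, hQ', ← sum_add_distrib]
    apply sum_congr rfl
    intro B _
    have := hDle B
    split_ifs <;> omega
  -- inequality I
  have hI : P + (2 * k + 1 - s) * Q ≤ s * C := by
    have := avg_set Xᶜ (2 * k + 1) (k - 1) (s * (2 * k + 1))
      (fun B => min (D B).card s + (2 * k + 1 - s) * if (D B).card = s + 1 then 1 else 0)
      (by
        rw [hY]
        obtain ⟨κ, rfl⟩ := hmk
        simp only [Nat.add_sub_cancel]
        have : 2 * (κ + 1) ^ 2 = (2 * (κ + 1) + 1) * κ + (κ + 2) := by ring
        omega)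
      (by
        intro B hB hd
        have := greedy_sum (2 * k + 1) (s + 1) (fun p => D (B p))
          (fun p => min (D (B p)).card s + (2 * k + 1 - s) * if (D (B p)).card = s + 1 then 1 else 0)
          (by
            intro p x hp hx hm
            refine hν (fun j => insert (x j) (B (p j))) (fun j => (hDX _ _ (hm j)).2) ?_
            intro i j hij
            exact ext_disj _ _ _ _ (hDX _ _ (hm i)).1 (hDX _ _ (hm j)).1 (hB _).1 (hB _).1
              (fun h => hij (hx h)) (hd _ _ (fun h => hij (hp h))))
          (by
            intro p
            have := hDle (B p)
            split_ifs <;> omega)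
          (by
            intro p hlt
            rw [if_neg (by omega)]
            simp)
        simpa using this)
    rw [sum_add_distrib, ← mul_sum, ← hQ', ← hP, hY, ← hC] at this
    apply Nat.le_of_mul_le_mul_left _ (show 0 < 2 * k + 1 by omega)
    calc _ ≤ _ := this
      _ = _ := by ring
  -- inequality II
  have hYZ : (Xᶜ \ Z).card = n - s - 1 - (k - 1) := by
    rw [card_sdiff_of_subset hZX, hY, hZc]
  have hII' : ∑ B ∈ powersetCard (k - 1) (Xᶜ \ Z), min (D B).card s ≤ (s - 1) * C' := by
    have := avg_set (Xᶜ \ Z) (2 * k) (k - 1) ((s - 1) * (2 * k))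
      (fun B => min (D B).card s)
      (by
        rw [hYZ]
        obtain ⟨κ, rfl⟩ := hmk
        simp only [Nat.add_sub_cancel]
        have : 2 * (κ + 1) ^ 2 = (2 * (κ + 1)) * κ + κ + (κ + 2) := by ring
        omega)
      (by
        intro B hB hd
        have hBX : ∀ p, B p ⊆ Xᶜ := fun p => (hB p).1.trans sdiff_subset
        have hBZ : ∀ p, Disjoint Z (B p) := fun p =>
          (disjoint_sdiff).mono_right (hB p).1
        exact greedy_sum (2 * k) s (fun p => D (B p)) (fun p => min (D (B p)).card s)
          (by
            intro p x hp hx hm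
            obtain ⟨y, hyX, hy⟩ : ∃ y ∈ X, y ∉ univ.image x := by
              apply exists_mem_notMem_of_card_lt_card
              calc _ ≤ (univ : Finset (Fin s)).card := card_image_le
                _ < X.card := by simp [hX]
            have hy' : ∀ j, y ≠ x j := fun j h => hy (mem_image.2 ⟨j, mem_univ _, h.symm⟩)
            refine hν (Fin.cons (insert y Z) (fun j => insert (x j) (B (p j)))) ?_ ?_
            · intro i
              refine Fin.cases ?_ (fun j => ?_) i
              · simpa using hZ y hyX
              · simpa using (hDX _ _ (hm j)).2
            · intro i j
              refine Fin.cases ?_ (fun i => ?_) i <;> refine Fin.cases ?_ (fun j => ?_) j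
              · intro h; exact absurd rfl h
              · intro _
                simp only [Fin.cons_zero, Fin.cons_succ]
                exact ext_disj _ _ _ _ hyX (hDX _ _ (hm j)).1 hZX (hBX _) (hy' j) (hBZ _)
              · intro _
                simp only [Fin.cons_zero, Fin.cons_succ]
                exact (ext_disj _ _ _ _ hyX (hDX _ _ (hm i)).1 hZX (hBX _) (hy' i) (hBZ _)).symm
              · intro hij
                have hij : i ≠ j := fun h => hij (by rw [h])
                simp only [Fin.cons_succ]
                exact ext_disj _ _ _ _ (hDX _ _ (hm i)).1 (hDX _ _ (hm j)).1 (hBX _) (hBX _)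
                  (fun h => hij (hx h)) (hd _ _ (fun h => hij (hp h))))
          (by
            intro p
            omega)
          (by
            intro p hlt
            omega))
    rw [hYZ, ← hC'] at this
    apply Nat.le_of_mul_le_mul_left _ (show 0 < 2 * k by omega)
    calc _ ≤ _ := this
      _ = _ := by ring
  have hII : P + C' ≤ s * C := by
    have hsub : powersetCard (k - 1) (Xᶜ \ Z) ⊆ powersetCard (k - 1) Xᶜ :=
      powersetCard_mono sdiff_subset
    have h1 := sum_sdiff hsub (f := fun B => min (D B).card s)
    have h2 : ∑ B ∈ powersetCard (k - 1) Xᶜ \ powersetCard (k - 1) (Xᶜ \ Z), min (D B).card s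
        ≤ (C - C') * s := by
      calc _ ≤ ∑ B ∈ powersetCard (k - 1) Xᶜ \ powersetCard (k - 1) (Xᶜ \ Z), s :=
            sum_le_sum (fun B _ => min_le_right _ _)
        _ = _ := by
          rw [sum_const, card_sdiff_of_subset hsub, card_powersetCard, card_powersetCard, hY, hYZ,
            smul_eq_mul]
    have h3 : C' ≤ C := Nat.choose_le_choose _ (by omega)
    obtain ⟨d, hd⟩ := Nat.exists_eq_add_of_le h3
    obtain ⟨t, rfl⟩ : ∃ t, s = t + 1 := ⟨s - 1, by omega⟩
    rw [hd] at h2 ⊢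
    simp only [Nat.add_sub_cancel, Nat.add_sub_cancel_left] at h2 hII'
    have : (t + 1) * (C' + d) = t * C' + d * (t + 1) + C' := by ring
    rw [this, hP, ← h1]
    omega
  have hhalf : C ≤ 2 * C' := by
    apply choose_half _ _ (by omega)
    obtain ⟨κ, rfl⟩ := hmk
    simp only [Nat.add_sub_cancel]
    have : 2 * (κ + 1) ^ 2 = 2 * κ ^ 2 + 4 * κ + 2 := by ring
    omega
  rw [hPQ] at hcb
  -- arithmetic
  obtain ⟨R, hR⟩ := Nat.exists_eq_add_of_le (show P ≤ s * C by omega)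
  have a1 : 3 * ((s + 1) * Q) ≤ R := by
    have : 3 * (s + 1) * Q ≤ (2 * k + 1 - s) * Q := Nat.mul_le_mul_right _ (by omega)
    have e1 : 3 * ((s + 1) * Q) = 3 * (s + 1) * Q := by ring
    omega
  have a2 : C' ≤ R := by omega
  have e2 : (s + 1) * Q = s * Q + Q := by ring
  obtain ⟨V, hV⟩ := Nat.exists_eq_add_of_le (show (s + 1) * Q ≤ R by omega)
  have a3 : C ≤ 3 * V := by omega
  have a4 : F.card + (n - s).choose k + V ≤ n.choose k := by omega
  have a5 : s * C ≤ k * V := by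
    calc s * C ≤ s * (3 * V) := Nat.mul_le_mul_left _ a3
      _ = 3 * s * V := by ring
      _ ≤ _ := Nat.mul_le_mul_right _ hk
  have a6 := Nat.mul_le_mul_left k a4
  rw [mul_add, mul_add] at a6
  omega


lemma exists_initial {α : Type*} [LinearOrder α] (W : Finset α) (c : ℕ) (hc : c ≤ W.card) :
    ∃ Z ⊆ W, Z.card = c ∧ ∀ z ∈ Z, ∀ w ∈ W, w ∉ Z → z < w := by
  induction c with
  | zero => exact ⟨∅, by simp, by simp, by simp⟩
  | succ c ih =>
    obtain ⟨Z, hZ, hZc, h⟩ := ih (by omega)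
    have hne : (W \ Z).Nonempty := by
      rw [← Finset.card_pos, Finset.card_sdiff_of_subset hZ]; omega
    have hm := Finset.min'_mem _ hne
    have hle := Finset.min'_le (W \ Z)
    set x := (W \ Z).min' hne
    rw [Finset.mem_sdiff] at hm
    refine ⟨insert x Z, ?_, ?_, ?_⟩
    · exact Finset.insert_subset hm.1 hZ
    · rw [Finset.card_insert_of_notMem hm.2, hZc]
    · intro z hz w hw hwn
      simp only [Finset.mem_insert, not_or] at hz hwn
      rcases hz with rfl | hz
      · exact lt_of_le_of_ne (hle w (Finset.mem_sdiff.2 ⟨hw, hwn.2⟩)) (Ne.symm hwn.1)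
      · exact h z hz w hw hwn.2

/-- covered by `s + 1` elements, all of them necessary -/
lemma covered_case (n k s : ℕ) (hs : 0 < s) (hn : 2 * k ^ 2 ≤ n) (hk : 3 * s ≤ k)
    (F : Finset (Finset (Fin n))) (hcard : ∀ A ∈ F, A.card = k) (hν : NoM s F)
    (X : Finset (Fin n)) (hX : X.card = s + 1) (hcov : ∀ A ∈ F, ¬ Disjoint A X)
    (hne : ∀ x ∈ X, ∃ A ∈ F, A ∩ X = {x}) :
    k * F.card + k * (n - s).choose k + s * (n - s - 1).choose (k - 1) ≤ k * n.choose k := by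
  classical
  have hkk : 3 * k ≤ k ^ 2 := by nlinarith
  obtain ⟨F', ⟨p1, p2, p3, p4, p5⟩, hmin⟩ := exists_min (fun G => G.card = F.card ∧
    (∀ A ∈ G, A.card = k) ∧ NoM s G ∧ (∀ A ∈ G, ¬ Disjoint A X) ∧ ∀ x ∈ X, ∃ A ∈ G, A ∩ X = {x})
    F ⟨rfl, hcard, hν, hcov, hne⟩
  have hst : ∀ i ∈ Xᶜ, ∀ j ∈ Xᶜ, i < j → Stab i j F' := by
    intro i hi j hj hij
    rcases hmin i j hij with h | h
    · exact h
    exfalso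
    apply h
    rw [Finset.mem_compl] at hi hj
    have hinter : ∀ A, shiftSet i j F' A ∩ X = A ∩ X := by
      intro A
      unfold shiftSet
      split_ifs
      · grind
      · rfl
    refine ⟨by rw [shift_card, p1], shift_sized p2, shift_noM p3, ?_, ?_⟩
    · intro A hA
      obtain ⟨B, hB, rfl⟩ := Finset.mem_image.1 hA
      rw [Finset.disjoint_iff_inter_eq_empty, hinter, ← Finset.disjoint_iff_inter_eq_empty]
      exact p4 B hB
    · intro x hx
      obtain ⟨A, hA, hAx⟩ := p5 x hx
      exact ⟨_, Finset.mem_image_of_mem _ hA, by rw [hinter, hAx]⟩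
  have hY : (Xᶜ).card = n - s - 1 := by rw [Finset.card_compl, hX]; simp; omega
  obtain ⟨Z, hZ1, hZ2, hZ3⟩ := exists_initial Xᶜ (k - 1) (by rw [hY]; omega)
  have := core n k s hs hn hk F' p2 p3 X Z hX hZ1 hZ2 (by
    intro x hx
    obtain ⟨A, hA, hAx⟩ := p5 x hx
    have hd : A \ Xᶜ = {x} := by rw [← hAx]; ext; simp
    have hxA : A \ {x} = A ∩ Xᶜ := by rw [← hAx]; ext; simp
    have := initial F' Xᶜ Z hst hZ1 hZ3 A hA (by
      rw [← hxA, Finset.card_sdiff_of_subset (by rw [← hAx]; exact Finset.inter_subset_left), p2 A hA,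
        hZ2]
      simp)
    rw [hd] at this
    rwa [Finset.insert_eq]) (by
    rw [Finset.filter_false_of_mem p4]
    simp)
  rwa [p1] at this

open Finset FinsetFamily in
lemma shifted_case (n k s : ℕ) (hs : 0 < s) (hn : 2 * k ^ 2 ≤ n) (hk : 3 * s ≤ k)
    (F : Finset (Finset (Fin n))) (hcard : ∀ A ∈ F, A.card = k) (hν : NoM s F)
    (hst : ∀ i j, i < j → Stab i j F)
    (hcov : ¬ ∃ T : Finset (Fin n), T.card = s ∧ ∀ A ∈ F, ¬ Disjoint A T) :
    k * F.card + k * (n - s).choose k + s * (n - s - 1).choose (k - 1) ≤ k * n.choose k := by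
  classical
  have hkk : 3 * k ≤ k ^ 2 := by nlinarith
  obtain ⟨T, -, hTc, hT⟩ := exists_initial (univ : Finset (Fin n)) s (by simp; omega)
  push Not at hcov
  obtain ⟨A, hA, hAT⟩ := hcov T hTc
  have hTcc : (Tᶜ).card = n - s := by rw [card_compl, hTc]; simp
  obtain ⟨V, hV, hVc, hV3⟩ := exists_initial Tᶜ 1 (by omega)
  obtain ⟨v, rfl⟩ := card_eq_one.1 hVc
  have hvT : v ∉ T := by
    have := hV (mem_singleton_self v)
    rwa [mem_compl] at this
  set X := insert v T with hXdef
  have hX : X.card = s + 1 := by rw [hXdef, card_insert_of_notMem hvT, hTc]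
  have hXlt : ∀ x ∈ X, ∀ y, y ∉ X → x < y := by
    intro x hx y hy
    rw [hXdef, mem_insert, not_or] at hy
    rcases mem_insert.1 hx with rfl | hx
    · exact hV3 _ (mem_singleton_self _) y (mem_compl.2 hy.2) (by simpa using hy.1)
    · exact hT x hx y (mem_univ _) hy.2
  have hY : (Xᶜ).card = n - s - 1 := by rw [card_compl, hX]; simp; omega
  obtain ⟨Z, hZ1, hZ2, hZ3⟩ := exists_initial Xᶜ (k - 1) (by rw [hY]; omega)
  have hvZ : v ∉ Z := fun h => (mem_compl.1 (hZ1 h)) (mem_insert_self _ _)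
  have hZv : insert v Z ∈ F := by
    have hAW : A ∩ Tᶜ = A := by
      rw [inter_eq_left]
      intro x hx
      rw [mem_compl]
      exact disjoint_left.1 hAT hx
    have := initial F Tᶜ (insert v Z) (fun i _ j _ => hst i j) (by
      apply insert_subset (mem_compl.2 hvT)
      intro z hz
      have := mem_compl.1 (hZ1 hz)
      rw [mem_compl]
      exact fun h => this (mem_insert_of_mem h)) (by
      intro z hz w hw hwn
      rw [mem_insert, not_or] at hwn
      have hwX : w ∉ X := by
        rw [hXdef, mem_insert, not_or]
        exact ⟨hwn.1, mem_compl.1 hw⟩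
      rcases mem_insert.1 hz with rfl | hz
      · exact hXlt _ (mem_insert_self _ _) _ hwX
      · exact hZ3 z hz w (mem_compl.2 hwX) hwn.2) A hA (by
      rw [hAW, hcard A hA, card_insert_of_notMem hvZ, hZ2]; omega)
    have h2 : A \ Tᶜ = ∅ := by
      rw [sdiff_eq_empty_iff_subset, ← hAW]; exact inter_subset_right
    rwa [h2, empty_union] at this
  refine core n k s hs hn hk F hcard hν X Z hX hZ1 hZ2 ?_ ?_
  · intro x hx
    rcases mem_insert.1 hx with rfl | hxT
    · exact hZv
    · have hxv : x < v := hT x hxT v (mem_univ _) hvT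
      have := hst x v hxv _ hZv (mem_insert_self _ _) (by
        rw [mem_insert, not_or]
        exact ⟨hxv.ne, fun h => (mem_compl.1 (hZ1 h)) hx⟩)
      rwa [erase_insert hvZ] at this
  · have hsub : ∀ A ∈ F.filter (fun A => Disjoint A X), A ⊆ Xᶜ ∧ A.card = k := by
      intro A hA
      rw [mem_filter] at hA
      refine ⟨?_, hcard A hA.1⟩
      intro x hx
      rw [mem_compl]
      exact disjoint_left.1 hA.2 hx
    have := shadow_bound s Xᶜ k (by omega) (F.filter (fun A => Disjoint A X)) hsub (by
      intro i hi j hj hij A hA hjA hiA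
      rw [mem_filter] at hA ⊢
      refine ⟨hst i j hij A hA.1 hjA hiA, ?_⟩
      rw [disjoint_insert_left]
      exact ⟨mem_compl.1 hi, hA.2.mono_left (erase_subset _ _)⟩) (by
      intro f hf hd
      exact hν f (fun i => (mem_filter.1 (hf i)).1) hd)
    refine this.trans (Nat.mul_le_mul_left _ (card_le_card ?_))
    intro B hB
    obtain ⟨A, hA, a, ha, rfl⟩ := mem_shadow_iff.1 hB
    have h1 := hsub A hA
    rw [mem_filter, mem_powersetCard]
    refine ⟨⟨(erase_subset _ _).trans h1.1, by rw [card_erase_of_mem ha, h1.2]⟩, ?_⟩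
    intro x hx
    have haX := mem_compl.1 (h1.1 ha)
    exact hst x a (hXlt x hx a haX) A (mem_filter.1 hA).1 ha
      (fun h => (mem_compl.1 (h1.1 h)) hx)

lemma stability (n k s : ℕ) (hs : 0 < s) (hn : 2 * k ^ 2 ≤ n) (hk : 3 * s ≤ k)
    (F : Finset (Finset (Fin n))) (hcard : ∀ A ∈ F, A.card = k) (hν : NoM s F)
    (hcov : ¬ ∃ T : Finset (Fin n), T.card = s ∧ ∀ A ∈ F, ¬ Disjoint A T) :
    k * F.card + k * (n - s).choose k + s * (n - s - 1).choose (k - 1) ≤ k * n.choose k := by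
  classical
  obtain ⟨F', ⟨p1, p2, p3, p4⟩, hmin⟩ := exists_min (fun G => G.card = F.card ∧
    (∀ A ∈ G, A.card = k) ∧ NoM s G ∧
      ¬ ∃ T : Finset (Fin n), T.card = s ∧ ∀ A ∈ G, ¬ Disjoint A T)
    F ⟨rfl, hcard, hν, hcov⟩
  rw [← p1]
  by_cases hall : ∀ i j, i < j → Stab i j F'
  · exact shifted_case n k s hs hn hk F' p2 p3 hall p4
  push Not at hall
  obtain ⟨i, j, hij, hns⟩ := hall
  have hnP := (hmin i j hij).resolve_left hns
  have : ∃ T : Finset (Fin n), T.card = s ∧ ∀ A ∈ shiftFam i j F', ¬ Disjoint A T := by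
    by_contra hcon
    exact hnP ⟨by rw [shift_card, p1], shift_sized p2, shift_noM p3, hcon⟩
  obtain ⟨T, hTc, hT⟩ := this
  have hmeet : ∀ A ∈ F', ¬ Disjoint A (insert j T) := by
    intro A hA hd
    rw [Finset.disjoint_insert_right] at hd
    refine hT _ (Finset.mem_image_of_mem (shiftSet i j F') hA) ?_
    unfold shiftSet
    rw [if_neg (fun h => hd.1 h.1)]
    exact hd.2
  have hjT : j ∉ T := by
    intro hj
    rw [Finset.insert_eq_of_mem hj] at hmeet
    exact p4 ⟨T, hTc, hmeet⟩
  have hX : (insert j T).card = s + 1 := by rw [Finset.card_insert_of_notMem hjT, hTc]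
  refine covered_case n k s hs hn hk F' p2 p3 (insert j T) hX hmeet ?_
  intro x hx
  push Not at p4
  obtain ⟨A, hA, hd⟩ := p4 ((insert j T).erase x) (by rw [Finset.card_erase_of_mem hx, hX]; simp)
  refine ⟨A, hA, ?_⟩
  have h1 := hmeet A hA
  rw [Finset.not_disjoint_iff] at h1
  obtain ⟨y, hyA, hyX⟩ := h1
  have honly : ∀ z ∈ A, z ∈ insert j T → z = x := by
    intro z hz hz'
    by_contra hzx
    exact Finset.disjoint_left.1 hd hz (Finset.mem_erase.2 ⟨hzx, hz'⟩)
  have hyx := honly y hyA hyX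
  subst hyx
  ext z
  simp only [Finset.mem_inter, Finset.mem_singleton]
  constructor
  · rintro ⟨h1, h2⟩; exact honly z h1 h2
  · rintro rfl; exact ⟨hyA, hyX⟩

open Finset in
lemma degree_cov (n k s : ℕ) (hk : 1 ≤ k) (F : Finset (Finset (Fin n)))
    (hcard : ∀ A ∈ F, A.card = k) (T : Finset (Fin n)) (hTc : T.card = s)
    (hT : ∀ A ∈ F, ¬ Disjoint A T) (v : Fin n) (hv : v ∉ T) :
    (F.filter (fun A => v ∈ A)).card + (n - s - 1).choose (k - 1) ≤ (n - 1).choose (k - 1) := by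
  classical
  have c1 : ((F.filter (fun A => v ∈ A)).image (fun A => A.erase v)).card
      = (F.filter (fun A => v ∈ A)).card := by
    apply Finset.card_image_of_injOn
    intro A hA B hB hAB
    rw [Finset.mem_coe, Finset.mem_filter] at hA hB
    simp only at hAB
    rw [← Finset.insert_erase hA.2, hAB, Finset.insert_erase hB.2]
  have c2 : (powersetCard (k - 1) ((insert v T)ᶜ)).card = (n - s - 1).choose (k - 1) := by
    rw [card_powersetCard, card_compl, card_insert_of_notMem hv, hTc, Fintype.card_fin, Nat.sub_sub]
  have c3 : (powersetCard (k - 1) (univ.erase v)).card = (n - 1).choose (k - 1) := by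
    rw [card_powersetCard, card_erase_of_mem (mem_univ _), card_univ, Fintype.card_fin]
  rw [← c1, ← c2, ← c3, ← card_union_of_disjoint]
  · apply card_le_card
    apply union_subset
    · intro B hB
      obtain ⟨A, hA, rfl⟩ := mem_image.1 hB
      rw [mem_filter] at hA
      rw [mem_powersetCard]
      exact ⟨erase_subset_erase _ (subset_univ _), by rw [card_erase_of_mem hA.2, hcard A hA.1]⟩
    · apply powersetCard_mono
      intro x hx
      simp only [mem_compl, mem_insert, not_or] at hx
      simp [hx.1]
  · rw [disjoint_left]
    intro B hB hB'
    obtain ⟨A, hA, rfl⟩ := mem_image.1 hB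
    rw [mem_filter] at hA
    apply hT A hA.1
    rw [disjoint_left]
    intro x hx hxT
    have hxv : x ≠ v := fun h => hv (h ▸ hxT)
    have := (mem_powersetCard.1 hB').1 (mem_erase.2 ⟨hxv, hx⟩)
    simp [hxT] at this


/-- Degree version of the Erdős Matching Conjecture, case t = 1 (Theorem 7):
if `n ≥ 2k²` and `k ≥ 3s`, then any family `F` of `k`-subsets of `[n]` with
matching number at most `s` satisfies `δ_1(F) ≤ C(n-1, k-1) - C(n-s-1, k-1)`. -/
theorem degree_EMC (n k s : ℕ) (hs : 0 < s)
    (hn : 2 * k ^ 2 ≤ n) (hk : 3 * s ≤ k)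
    (F : Finset (Finset (Fin n)))
    (hcard : ∀ A ∈ F, A.card = k)
    (hmatch : ∀ M ⊆ F, (∀ A ∈ M, ∀ B ∈ M, A ≠ B → Disjoint A B) → M.card ≤ s) :
    ∃ i : Fin n, ((F.filter (fun A => i ∈ A)).card : ℤ) ≤
      ((n - 1).choose (k - 1) : ℤ) - ((n - s - 1).choose (k - 1) : ℤ) := by

  classical
  have hkk : 3 * k ≤ k ^ 2 := by nlinarith
  have hν : NoM s F := by
    intro f hf hd
    have hinj : Function.Injective f := by
      intro i j hij
      by_contra hne
      have h1 := hd i j hne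
      rw [← hij, disjoint_self] at h1
      have h2 := hcard _ (hf i)
      rw [h1] at h2
      simp at h2
      omega
    have := hmatch (Finset.univ.image f) (by
      intro A hA
      obtain ⟨i, -, rfl⟩ := Finset.mem_image.1 hA
      exact hf i) (by
      intro A hA B hB hAB
      obtain ⟨i, -, rfl⟩ := Finset.mem_image.1 hA
      obtain ⟨j, -, rfl⟩ := Finset.mem_image.1 hB
      exact hd i j (fun h => hAB (by rw [h])))
    rw [Finset.card_image_of_injective _ hinj] at this
    simp at this
  by_cases hcov : ∃ T : Finset (Fin n), T.card = s ∧ ∀ A ∈ F, ¬ Disjoint A T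
  · obtain ⟨T, hTc, hT⟩ := hcov
    obtain ⟨v, -, hv⟩ := Finset.exists_mem_notMem_of_card_lt_card
      (s := T) (t := (Finset.univ : Finset (Fin n))) (by simp; omega)
    refine ⟨v, ?_⟩
    have := degree_cov n k s (by omega) F hcard T hTc hT v hv
    omega
  · have hstab := stability n k s hs hn hk F hcard hν hcov
    by_contra hcon
    push Not at hcon
    have hdeg : ∑ i : Fin n, (F.filter (fun A => i ∈ A)).card = k * F.card := by
      simp only [Finset.card_filter]
      rw [Finset.sum_comm]
      have : ∀ A ∈ F, (∑ i : Fin n, if i ∈ A then 1 else 0) = k := by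
        intro A hA
        rw [← hcard A hA]; simp
      rw [Finset.sum_congr rfl this]
      simp [mul_comm]
    have hlt : ∀ i ∈ (Finset.univ : Finset (Fin n)), (n - 1).choose (k - 1) + 1 ≤
        (F.filter (fun A => i ∈ A)).card + (n - s - 1).choose (k - 1) := by
      intro i _
      have := hcon i
      omega
    have hsum := Finset.sum_le_sum hlt
    rw [Finset.sum_add_distrib, Finset.sum_add_distrib, hdeg] at hsum
    simp only [Finset.sum_const, Finset.card_univ, Fintype.card_fin, smul_eq_mul] at hsum
    have e1 : n * (n - 1).choose (k - 1) = k * n.choose k := by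
      have := Nat.add_one_mul_choose_eq (n - 1) (k - 1)
      rw [Nat.sub_add_cancel (by omega), Nat.sub_add_cancel (by omega)] at this
      rw [this, mul_comm]
    have e2 : (n - s) * (n - s - 1).choose (k - 1) = k * (n - s).choose k := by
      have := Nat.add_one_mul_choose_eq (n - s - 1) (k - 1)
      rw [Nat.sub_add_cancel (by omega), Nat.sub_add_cancel (by omega)] at this
      rw [this, mul_comm]
    have e3 : n * (n - s - 1).choose (k - 1) = k * (n - s).choose k + s * (n - s - 1).choose (k - 1) := by
      rw [← e2, ← add_mul, Nat.sub_add_cancel (by omega)]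
    rw [e1, e3] at hsum
    omega
end

section
/- Let n > 2k ≥ 6 and let F be an intersecting family of k-element subsets of [n] with diversity γ(F) ≥ C(n-4, k-3). Then |F| ≤ C(n-2, k-2) + 2·C(n-3, k-2). -/
section
open Finset Finset.Colex
open scoped FinsetFamily

namespace DivAux

lemma exists_seg {N : ℕ} (m t : ℕ) (ht : t ≤ N.choose m) :
    ∃ 𝒞 : Finset (Finset (Fin N)), IsInitSeg 𝒞 m ∧ #𝒞 = t := by
  obtain ⟨d, hd⟩ := Nat.exists_eq_add_of_le ht
  induction d generalizing t with
  | zero =>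
    refine ⟨powersetCard m univ, ⟨Set.sized_powersetCard _ _, ?_⟩, ?_⟩
    · rintro A B hA ⟨-, hB⟩
      exact mem_powersetCard.2 ⟨subset_univ _, hB⟩
    · simp [hd]
  | succ d ih =>
    obtain ⟨𝒞, h𝒞, hc⟩ := ih (t + 1) (by omega) (by omega)
    have hne : 𝒞.Nonempty := card_pos.1 (by omega)
    obtain ⟨S, hS, hmax⟩ := exists_max_image 𝒞 (fun s => toColex s) hne
    refine ⟨𝒞.erase S, ⟨fun A hA => h𝒞.1 (mem_of_mem_erase (mem_coe.1 hA)), ?_⟩, ?_⟩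
    · rintro A B hA ⟨hlt, hB⟩
      have hA' := mem_of_mem_erase hA
      refine mem_erase.2 ⟨?_, h𝒞.2 hA' ⟨hlt, hB⟩⟩
      rintro rfl
      exact absurd (hmax A hA') (not_le.2 hlt)
    · rw [card_erase_of_mem hS]; omega

def rng (N M : ℕ) : Finset (Fin N) := univ.filter (fun x => x.val < M)

lemma mem_rng {N M : ℕ} {x : Fin N} : x ∈ rng N M ↔ x.val < M := by simp [rng]

lemma card_rng {N M : ℕ} (h : M ≤ N) : #(rng N M) = M := by
  have : (rng N M).map Fin.valEmbedding = range M := by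
    ext x
    simp only [mem_map, mem_rng, Fin.valEmbedding_apply, mem_range]
    constructor
    · rintro ⟨a, ha, rfl⟩; exact ha
    · intro hx; exact ⟨⟨x, by omega⟩, hx, rfl⟩
  rw [← card_map, this, card_range]

lemma initSeg_rng (N M r : ℕ) : IsInitSeg (powersetCard r (rng N M)) r := by
  refine ⟨Set.sized_powersetCard _ _, ?_⟩
  simp_rw [mem_powersetCard]
  rintro A B hA ⟨HB₁, HB₂⟩
  refine ⟨fun t ht ↦ ?_, ‹_›⟩
  rw [mem_rng]
  have : toColex (image Fin.val B) < toColex (image Fin.val A) := by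
    rwa [toColex_image_lt_toColex_image Fin.val_strictMono]
  apply Colex.forall_lt_mono this.le _ t (mem_image.2 ⟨t, ht, rfl⟩)
  simp_rw [mem_image]
  rintro _ ⟨a, ha, rfl⟩
  exact mem_rng.1 (hA.1 ha)

lemma seg_sub {N m : ℕ} {𝒜 ℬ : Finset (Finset (Fin N))} (h1 : IsInitSeg 𝒜 m)
    (h2 : IsInitSeg ℬ m) (h : #𝒜 ≤ #ℬ) : 𝒜 ⊆ ℬ := by
  rcases h1.total h2 with h' | h'
  · exact h'
  · rw [eq_of_subset_of_card_le h' h]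

lemma matching {α : Type*} [DecidableEq α] (W : Finset α) (m l : ℕ) (hlm : l ≤ m)
    (hW : l + m = #W) (X : Finset (Finset α)) (hX : X ⊆ powersetCard m W) :
    #X ≤ #((powersetCard l W).filter (fun U => ∃ S ∈ X, U ⊆ S)) := by
  have hpos : 0 < m.choose l := Nat.choose_pos hlm
  refine Nat.le_of_mul_le_mul_right ?_ hpos
  refine card_mul_le_card_mul (fun S U => U ⊆ S) ?_ ?_
  · intro S hS
    obtain ⟨hSW, hSm⟩ := mem_powersetCard.1 (hX hS)
    rw [← hSm, ← card_powersetCard]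
    apply card_le_card
    intro U hU
    obtain ⟨hUS, hUl⟩ := mem_powersetCard.1 hU
    simp only [mem_bipartiteAbove, mem_filter, mem_powersetCard]
    exact ⟨⟨⟨hUS.trans hSW, hUl⟩, S, hS, hUS⟩, hUS⟩
  · intro U hU
    obtain ⟨hUW, hUl⟩ := mem_powersetCard.1 (mem_filter.1 hU).1
    have h1 : #(powersetCard (m - l) (W \ U)) = m.choose l := by
      rw [card_powersetCard, card_sdiff_of_subset hUW, ← hW, hUl, Nat.add_sub_cancel_left,
        Nat.choose_symm hlm]
    rw [← h1]
    refine card_le_card_of_injOn (fun S => S \ U) ?_ ?_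
    · intro S hS
      simp only [coe_bipartiteBelow, Set.mem_ofPred_eq] at hS
      obtain ⟨hSW, hSm⟩ := mem_powersetCard.1 (hX hS.1)
      simp only [mem_coe, mem_powersetCard]
      refine ⟨sdiff_subset_sdiff hSW (Subset.refl _), ?_⟩
      rw [card_sdiff_of_subset hS.2, hSm, hUl]
    · intro S hS S' hS' h
      simp only [coe_bipartiteBelow, Set.mem_ofPred_eq] at hS hS'
      simp only at h
      rw [← sdiff_union_of_subset hS.2, h, sdiff_union_of_subset hS'.2]

lemma kk1 {N M m l : ℕ} (hM : M ≤ N) (hlm : l ≤ m) (hW : l + m = M)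
    (X : Finset (Finset (Fin N))) (hX : (X : Set (Finset (Fin N))).Sized m)
    (hc : #X ≤ M.choose m) : #X ≤ #(∂^[m - l] X) := by
  obtain ⟨𝒞, h𝒞, hc'⟩ := exists_seg (N := N) m (#X) (hc.trans (Nat.choose_le_choose m hM))
  have hsub : 𝒞 ⊆ powersetCard m (rng N M) := by
    apply seg_sub h𝒞 (initSeg_rng N M m)
    rw [card_powersetCard, card_rng hM]; omega
  calc #X = #𝒞 := hc'.symm
    _ ≤ _ := matching (rng N M) m l hlm (by rw [card_rng hM]; exact hW) 𝒞 hsub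
    _ ≤ #(∂^[m - l] 𝒞) := by
      apply card_le_card
      intro U hU
      simp only [mem_filter, mem_powersetCard] at hU
      obtain ⟨⟨-, hUl⟩, S, hS, hUS⟩ := hU
      rw [mem_shadow_iterate_iff_exists_mem_card_add]
      refine ⟨S, hS, hUS, ?_⟩
      rw [h𝒞.1 hS]; omega
    _ ≤ _ := iterated_kk hX hc'.le h𝒞

lemma kk2 {N M m l : ℕ} (hl : 1 ≤ l) (hM : M + 1 ≤ N) (hlm : l ≤ m) (hW : l + m = M)
    (X : Finset (Finset (Fin N))) (hX : (X : Set (Finset (Fin N))).Sized (m + 1))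
    (hc1 : M.choose (m + 1) ≤ #X)
    (hc : #X ≤ (M + 1).choose (m + 1)) :
    #X + M.choose (l + 1) ≤ #(∂^[m - l] X) + M.choose (m + 1) := by
  obtain ⟨𝒞, h𝒞, hc'⟩ := exists_seg (N := N) (m + 1) (#X) (hc.trans (Nat.choose_le_choose _ hM))
  have hsub : 𝒞 ⊆ powersetCard (m + 1) (rng N (M + 1)) := by
    apply seg_sub h𝒞 (initSeg_rng N (M + 1) (m + 1))
    rw [card_powersetCard, card_rng hM]; omega
  have hsup : powersetCard (m + 1) (rng N M) ⊆ 𝒞 := by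
    apply seg_sub (initSeg_rng N M (m + 1)) h𝒞
    rw [card_powersetCard, card_rng (by omega)]; omega
  let z : Fin N := ⟨M, by omega⟩
  have hz : z ∉ rng N M := by simp [mem_rng, z]
  have hrng : ∀ x, x ∈ rng N (M + 1) → x ≠ z → x ∈ rng N M := by
    intro x hx hxz
    rw [mem_rng] at hx ⊢
    have : x.val ≠ M := fun h => hxz (Fin.ext h)
    omega
  set D := (𝒞.filter (fun S => z ∈ S)).image (fun S => S.erase z) with hD
  have hDsub : D ⊆ powersetCard m (rng N M) := by
    intro U hU
    obtain ⟨S, hS, rfl⟩ := mem_image.1 hU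
    obtain ⟨hS, hzS⟩ := mem_filter.1 hS
    obtain ⟨h1, h2⟩ := mem_powersetCard.1 (hsub hS)
    refine mem_powersetCard.2 ⟨?_, by rw [card_erase_of_mem hzS, h2]; rfl⟩
    intro x hx
    exact hrng x (h1 (mem_of_mem_erase hx)) (ne_of_mem_erase hx)
  have hDcard : #D = #(𝒞.filter (fun S => z ∈ S)) := by
    apply card_image_of_injOn
    intro S hS S' hS' h
    simp only [coe_filter, Set.mem_ofPred_eq] at hS hS'
    simp only at h
    rw [← insert_erase hS.2, h, insert_erase hS'.2]
  have hCcard : #𝒞 = #D + M.choose (m + 1) := by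
    rw [hDcard, ← card_filter_add_card_filter_not (s := 𝒞) (fun S => z ∈ S)]
    congr 1
    have : 𝒞.filter (fun S => z ∉ S) = powersetCard (m + 1) (rng N M) := by
      ext S
      constructor
      · intro h
        obtain ⟨hS, hzS⟩ := mem_filter.1 h
        obtain ⟨h1, h2⟩ := mem_powersetCard.1 (hsub hS)
        exact mem_powersetCard.2 ⟨fun x hx => hrng x (h1 hx) (fun h => hzS (h ▸ hx)), h2⟩
      · intro h
        exact mem_filter.2 ⟨hsup h, fun hzS => hz ((mem_powersetCard.1 h).1 hzS)⟩
    rw [this, card_powersetCard, card_rng (by omega)]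
  have hm := matching (rng N M) m l hlm (by rw [card_rng (by omega)]; exact hW) D hDsub
  set E := (powersetCard l (rng N M)).filter (fun U => ∃ S ∈ D, U ⊆ S) with hE
  have hEz : ∀ U ∈ E, z ∉ U := fun U hU hzU =>
    hz ((mem_powersetCard.1 (mem_filter.1 hU).1).1 hzU)
  have hEi : #(E.image (insert z)) = #E := by
    apply card_image_of_injOn
    intro S hS S' hS' h
    rw [← erase_insert (hEz S hS), h, erase_insert (hEz S' hS')]
  have hdisj : Disjoint (E.image (insert z)) (powersetCard (l + 1) (rng N M)) := by
    rw [disjoint_left]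
    intro U hU hU'
    obtain ⟨V, -, rfl⟩ := mem_image.1 hU
    exact hz ((mem_powersetCard.1 hU').1 (mem_insert_self _ _))
  have hlast : m + 1 ≤ M := by omega
  · have hsh : E.image (insert z) ∪ powersetCard (l + 1) (rng N M) ⊆ ∂^[m - l] 𝒞 := by
      intro U hU
      rw [mem_shadow_iterate_iff_exists_mem_card_add]
      rcases mem_union.1 hU with hU | hU
      · obtain ⟨V, hV, rfl⟩ := mem_image.1 hU
        have hzV := hEz V hV
        obtain ⟨hV1, S, hS, hVS⟩ := mem_filter.1 hV
        obtain ⟨S', hS', rfl⟩ := mem_image.1 hS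
        obtain ⟨hS', hzS⟩ := mem_filter.1 hS'
        refine ⟨S', hS', ?_, ?_⟩
        · rw [← insert_erase hzS]
          exact insert_subset_insert _ hVS
        · rw [h𝒞.1 hS', card_insert_of_notMem hzV, (mem_powersetCard.1 hV1).2]; omega
      · obtain ⟨h1, h2⟩ := mem_powersetCard.1 hU
        obtain ⟨S, hUS, hS, hSc⟩ := exists_subsuperset_card_eq (n := m + 1) h1 (by omega)
          (by rw [card_rng (by omega)]; omega)
        exact ⟨S, hsup (mem_powersetCard.2 ⟨hS, hSc⟩), hUS, by omega⟩
    have h1 := card_le_card hsh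
    rw [card_union_of_disjoint hdisj, hEi, card_powersetCard, card_rng (by omega)] at h1
    have h2 : #(∂^[m - l] 𝒞) ≤ #(∂^[m - l] X) := iterated_kk hX hc'.le h𝒞
    omega

end DivAux

namespace DivAux

lemma ci {N a b : ℕ} (hab : a + b ≤ N) (T R : Finset (Finset (Fin N)))
    (hT : (T : Set (Finset (Fin N))).Sized a) (hR : (R : Set (Finset (Fin N))).Sized b)
    (hx : ∀ A ∈ T, ∀ B ∈ R, ¬ Disjoint A B) :
    #R + #(∂^[N - a - b] Tᶜˢ) ≤ N.choose b := by
  have hT' : (Tᶜˢ : Set (Finset (Fin N))).Sized (N - a) := by simpa using hT.compls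
  have hdis : Disjoint R (∂^[N - a - b] Tᶜˢ) := disjoint_right.2 fun A hAbar hA ↦ by
    simp only [mem_shadow_iterate_iff_exists_sdiff, mem_compls] at hAbar
    obtain ⟨C, hC, hAC, _⟩ := hAbar
    exact hx _ hC _ hA (disjoint_of_subset_right hAC disjoint_compl_left)
  rw [← card_union_of_disjoint hdis]
  have : ((R ∪ ∂^[N - a - b] Tᶜˢ : Finset (Finset (Fin N))) : Set (Finset (Fin N))).Sized b := by
    rw [coe_union, Set.sized_union]
    refine ⟨hR, ?_⟩
    have h := hT'.shadow_iterate (k := N - a - b)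
    have e : N - a - (N - a - b) = b := by omega
    rwa [e] at h
  simpa using this.card_le

lemma ci1 {N b : ℕ} (hN : 2 * b + 2 ≤ N) (T R : Finset (Finset (Fin N)))
    (hT : (T : Set (Finset (Fin N))).Sized (b + 2)) (hR : (R : Set (Finset (Fin N))).Sized b)
    (hx : ∀ A ∈ T, ∀ B ∈ R, ¬ Disjoint A B) (hc : #T ≤ (N - 2).choose b) :
    #R + #T ≤ N.choose b := by
  have h := ci (by omega) T R hT hR hx
  have hT' : (Tᶜˢ : Set (Finset (Fin N))).Sized (N - (b + 2)) := by simpa using hT.compls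
  have h2 := kk1 (N := N) (M := N - 2) (m := N - (b + 2)) (l := b) (by omega) (by omega) (by omega)
    Tᶜˢ hT' (by
      rw [card_compls]
      refine hc.trans (le_of_eq ?_)
      exact Nat.choose_symm_of_eq_add (by omega))
  rw [card_compls] at h2
  omega

lemma ci2 {N M m a b : ℕ} (hb : 1 ≤ b) (hma : m + 1 + a = N) (hbm : b + m = M) (hbm' : b ≤ m)
    (hMN : M + 1 ≤ N) (T R : Finset (Finset (Fin N)))
    (hT : (T : Set (Finset (Fin N))).Sized a) (hR : (R : Set (Finset (Fin N))).Sized (b + 1))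
    (hx : ∀ A ∈ T, ∀ B ∈ R, ¬ Disjoint A B) (hc1 : M.choose (m + 1) ≤ #T)
    (hc : #T ≤ (M + 1).choose (m + 1)) :
    #T + #R + M.choose (b + 1) ≤ N.choose (b + 1) + M.choose (m + 1) := by
  have h := ci (by omega) T R hT hR hx
  have hT' : (Tᶜˢ : Set (Finset (Fin N))).Sized (m + 1) := by
    have : (Tᶜˢ : Set (Finset (Fin N))).Sized (N - a) := by simpa using hT.compls
    have e : N - a = m + 1 := by omega
    rwa [e] at this
  have h2 := kk2 (N := N) (M := M) (m := m) (l := b) hb hMN hbm' hbm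
    Tᶜˢ hT' (by rwa [card_compls]) (by rwa [card_compls])
  have e : N - a - (b + 1) = m - b := by omega
  rw [e] at h
  rw [card_compls] at h2
  omega

lemma ci3 {N b : ℕ} (hN : 2 * (b + 1) ≤ N) (T R : Finset (Finset (Fin N)))
    (hT : (T : Set (Finset (Fin N))).Sized (b + 1)) (hR : (R : Set (Finset (Fin N))).Sized (b + 1))
    (hx : ∀ A ∈ T, ∀ B ∈ R, ¬ Disjoint A B) (hc : (N - 1).choose b ≤ #T) :
    #R ≤ (N - 1).choose b := by
  have h := ci (by omega) T R hT hR hx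
  have hT' : (Tᶜˢ : Set (Finset (Fin N))).Sized (N - (b + 1)) := by simpa using hT.compls
  have h2 := kruskal_katona_lovasz_form (i := N - (b + 1) - (b + 1)) (k := N - 1) (by omega)
    (by omega) (by omega) hT' (by
      rw [card_compls]
      refine le_trans (le_of_eq ?_) hc
      exact Nat.choose_symm_of_eq_add (by omega))
  have e : N - (b + 1) - (N - (b + 1) - (b + 1)) = b + 1 := by omega
  rw [e] at h2
  have e2 : N.choose (b + 1) = (N - 1).choose b + (N - 1).choose (b + 1) := by
    obtain ⟨N', rfl⟩ : ∃ N', N = N' + 1 := ⟨N - 1, by omega⟩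
    simp [Nat.choose_succ_succ]
  omega

lemma project {n N : ℕ} (D p : Finset (Fin n)) (f : Fin N ↪ Fin n)
    (hf : ∀ y, y ∉ D ↔ ∃ x, f x = y) (hp : p ⊆ D) (T : Finset (Finset (Fin n))) (a : ℕ)
    (hT : ∀ A ∈ T, #A = a + #p ∧ A ∩ D = p) :
    #(T.image (fun A => univ.filter (fun x => f x ∈ A))) = #T ∧
    ((T.image (fun A => univ.filter (fun x => f x ∈ A)) : Finset (Finset (Fin N))) :
      Set (Finset (Fin N))).Sized a := by
  have key : ∀ A ∈ T, (univ.filter (fun x => f x ∈ A)).map f = A \ p := by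
    intro A hA
    ext y
    simp only [mem_map, mem_filter, mem_univ, true_and, mem_sdiff]
    have h2 := (hT A hA).2
    constructor
    · rintro ⟨x, hx, rfl⟩
      exact ⟨hx, fun h => (hf (f x)).2 ⟨x, rfl⟩ (hp h)⟩
    · rintro ⟨hy, hyp⟩
      have : y ∉ D := fun h => hyp (h2 ▸ mem_inter.2 ⟨hy, h⟩)
      obtain ⟨x, rfl⟩ := (hf y).1 this
      exact ⟨x, hy, rfl⟩
  have hpA : ∀ A ∈ T, p ⊆ A := fun A hA => by
    rw [← (hT A hA).2]; exact inter_subset_left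
  constructor
  · apply card_image_of_injOn
    intro A hA B hB h
    simp only at h
    have h1 := key A hA
    rw [h, key B hB] at h1
    rw [← sdiff_union_of_subset (hpA A hA), ← h1, sdiff_union_of_subset (hpA B hB)]
  · intro S hS
    obtain ⟨A, hA, rfl⟩ := mem_image.1 (mem_coe.1 hS)
    rw [← card_map f, key A hA, card_sdiff_of_subset (hpA A hA), (hT A hA).1]
    omega

lemma transfer {n N : ℕ} (D p q : Finset (Fin n)) (hD : #D + N = n) (hp : p ⊆ D) (hq : q ⊆ D)
    (hpq : Disjoint p q) (T R : Finset (Finset (Fin n))) (a b : ℕ)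
    (hT : ∀ A ∈ T, #A = a + #p ∧ A ∩ D = p) (hR : ∀ A ∈ R, #A = b + #q ∧ A ∩ D = q)
    (hx : ∀ A ∈ T, ∀ B ∈ R, (A ∩ B).Nonempty) :
    ∃ T' R' : Finset (Finset (Fin N)), #T' = #T ∧ #R' = #R ∧
      (T' : Set (Finset (Fin N))).Sized a ∧ (R' : Set (Finset (Fin N))).Sized b ∧
      ∀ A ∈ T', ∀ B ∈ R', ¬ Disjoint A B := by
  have hc : #Dᶜ = N := by rw [card_compl, Fintype.card_fin]; omega
  let f : Fin N ↪ Fin n := (Dᶜ.orderEmbOfFin hc).toEmbedding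
  have hf : ∀ y, y ∉ D ↔ ∃ x, f x = y := by
    intro y
    have := Finset.range_orderEmbOfFin Dᶜ hc
    have h2 : y ∈ Set.range (Dᶜ.orderEmbOfFin hc) ↔ y ∉ D := by rw [this]; simp
    rw [← h2]; rfl
  obtain ⟨h1, h2⟩ := project D p f hf hp T a hT
  obtain ⟨h3, h4⟩ := project D q f hf hq R b hR
  refine ⟨_, _, h1, h3, h2, h4, ?_⟩
  intro A hA B hB
  obtain ⟨A, hA', rfl⟩ := mem_image.1 hA
  obtain ⟨B, hB', rfl⟩ := mem_image.1 hB
  obtain ⟨y, hy⟩ := hx A hA' B hB'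
  obtain ⟨hyA, hyB⟩ := mem_inter.1 hy
  have hyD : y ∉ D := by
    intro h
    have e1 : y ∈ p := (hT A hA').2 ▸ mem_inter.2 ⟨hyA, h⟩
    have e2 : y ∈ q := (hR B hB').2 ▸ mem_inter.2 ⟨hyB, h⟩
    exact disjoint_left.1 hpq e1 e2
  obtain ⟨x, rfl⟩ := (hf y).1 hyD
  rw [not_disjoint_iff]
  exact ⟨x, by simpa using hyA, by simpa using hyB⟩

end DivAux

namespace DivAux

lemma card_split {α : Type*} [DecidableEq α] (F : Finset (Finset α)) (x : α) :
    #F = #(F.filter (fun A => x ∈ A)) + #(F.filter (fun A => x ∉ A)) :=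
  (card_filter_add_card_filter_not (fun A => x ∈ A)).symm

lemma pascals (r c : ℕ) :
    (r + 3).choose (c + 2) + r.choose c = (r + 2).choose (c + 1) + 2 * (r + 1).choose (c + 1)
      + r.choose (c + 2) := by
  have h1 : (r + 3).choose (c + 2) = (r + 2).choose (c + 1) + (r + 2).choose (c + 2) :=
    Nat.choose_succ_succ _ _
  have h2 : (r + 2).choose (c + 2) = (r + 1).choose (c + 1) + (r + 1).choose (c + 2) :=
    Nat.choose_succ_succ _ _
  have h3 : (r + 1).choose (c + 2) = r.choose (c + 1) + r.choose (c + 2) :=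
    Nat.choose_succ_succ _ _
  have h4 : (r + 1).choose (c + 1) = r.choose c + r.choose (c + 1) :=
    Nat.choose_succ_succ _ _
  omega

lemma mid_case {r c : ℕ} (hrc : 2 * c + 2 < r) (F : Finset (Finset (Fin (r + 4))))
    (hcard : ∀ A ∈ F, #A = c + 3) (hint : ∀ A ∈ F, ∀ B ∈ F, (A ∩ B).Nonempty) (x : Fin (r + 4))
    (h1 : r.choose c ≤ #(F.filter (fun A => x ∉ A)))
    (h2 : #(F.filter (fun A => x ∉ A)) ≤ (r + 1).choose (c + 1)) :
    #F ≤ (r + 2).choose (c + 1) + 2 * (r + 1).choose (c + 1) := by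
  obtain ⟨T, R, hT, hR, hTs, hRs, hx⟩ := transfer (N := r + 3) {x} ∅ {x} (by simp; omega)
    (by simp) (by simp) (by simp) (F.filter (fun A => x ∉ A)) (F.filter (fun A => x ∈ A))
    (c + 3) (c + 2)
    (by
      intro A hA
      obtain ⟨hA, hxA⟩ := mem_filter.1 hA
      exact ⟨by simp [hcard A hA], by simp [hxA]⟩)
    (by
      intro A hA
      obtain ⟨hA, hxA⟩ := mem_filter.1 hA
      exact ⟨by simp [hcard A hA], by simp [hxA]⟩)
    (fun A hA B hB => hint A (mem_filter.1 hA).1 B (mem_filter.1 hB).1)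
  have e1 : r.choose (r - c - 1 + 1) = r.choose c := Nat.choose_symm_of_eq_add (by omega)
  have e2 : (r + 1).choose (r - c - 1 + 1) = (r + 1).choose (c + 1) :=
    Nat.choose_symm_of_eq_add (by omega)
  have h := ci2 (N := r + 3) (M := r) (m := r - c - 1) (a := c + 3) (b := c + 1) (by omega)
    (by omega) (by omega) (by omega) (by omega) T R hTs hRs hx (by rw [e1]; omega)
    (by rw [e2]; omega)
  rw [e1] at h
  have hp := pascals r c
  have hs := card_split F x
  simp only [add_assoc, Nat.reduceAdd] at h
  omega

lemma bad_case_pq {r c : ℕ} (hrc : 2 * c + 2 < r) (P Q : Finset (Finset (Fin (r + 2))))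
    (hP : (P : Set (Finset (Fin (r + 2)))).Sized (c + 2))
    (hQ : (Q : Set (Finset (Fin (r + 2)))).Sized (c + 2))
    (hx : ∀ A ∈ P, ∀ B ∈ Q, ¬ Disjoint A B)
    (h1 : r.choose c ≤ #P) (h2 : #P ≤ (r + 1).choose (c + 1)) :
    #P + #Q ≤ 2 * (r + 1).choose (c + 1) := by
  have e1 : r.choose (r - c - 1 + 1) = r.choose c := Nat.choose_symm_of_eq_add (by omega)
  have e2 : (r + 1).choose (r - c - 1 + 1) = (r + 1).choose (c + 1) :=
    Nat.choose_symm_of_eq_add (by omega)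
  have h := ci2 (N := r + 2) (M := r) (m := r - c - 1) (a := c + 2) (b := c + 1) (by omega)
    (by omega) (by omega) (by omega) (by omega) P Q hP hQ hx (by rw [e1]; omega)
    (by rw [e2]; omega)
  rw [e1] at h
  have hp := pascals r c
  have h3 : (r + 3).choose (c + 2) = (r + 2).choose (c + 1) + (r + 2).choose (c + 2) :=
    Nat.choose_succ_succ _ _
  simp only [add_assoc, Nat.reduceAdd] at h
  omega

lemma bad_case {r c : ℕ} (hrc : 2 * c + 2 < r) (F : Finset (Finset (Fin (r + 4))))
    (hcard : ∀ A ∈ F, #A = c + 3) (hint : ∀ A ∈ F, ∀ B ∈ F, (A ∩ B).Nonempty)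
    (i j : Fin (r + 4)) (hij : i ≠ j)
    (hT : #((F.filter (fun A => i ∉ A)).filter (fun A => j ∉ A)) < r.choose c)
    (hi : (r + 1).choose (c + 1) < #(F.filter (fun A => i ∉ A)))
    (hj : (r + 1).choose (c + 1) < #(F.filter (fun A => j ∉ A))) :
    #F ≤ (r + 2).choose (c + 1) + 2 * (r + 1).choose (c + 1) := by
  set P := (F.filter (fun A => i ∈ A)).filter (fun A => j ∉ A) with hP
  set Q := (F.filter (fun A => i ∉ A)).filter (fun A => j ∈ A) with hQ
  set R := (F.filter (fun A => i ∈ A)).filter (fun A => j ∈ A) with hR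
  set T := (F.filter (fun A => i ∉ A)).filter (fun A => j ∉ A) with hTd
  have s1 := card_split F i
  have s2 : _ = #R + #P := card_split (F.filter (fun A => i ∈ A)) j
  have s3 : _ = #Q + #T := card_split (F.filter (fun A => i ∉ A)) j
  have s4 : #(F.filter (fun A => j ∉ A)) = #P + #T := by
    rw [card_split (F.filter (fun A => j ∉ A)) i, filter_comm, ← hP, filter_comm, ← hTd]
  have hpc : (r + 1).choose (c + 1) = r.choose c + r.choose (c + 1) :=
    Nat.choose_succ_succ _ _
  have hmono : r.choose c ≤ r.choose (c + 1) := by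
    apply Nat.choose_le_succ_of_lt_half_left; omega
  have hji : j ≠ i := hij.symm
  have hDc : #({i, j} : Finset (Fin (r + 4))) = 2 := card_pair hij
  -- `T` and `R`
  have hTR : #R + #T ≤ (r + 2).choose (c + 1) := by
    obtain ⟨T', R', hT', hR', hTs, hRs, hx⟩ := transfer (N := r + 2) {i, j} ∅ {i, j}
      (by rw [hDc]; omega) (by simp) (by simp) (by simp) T R (c + 3) (c + 1)
      (by
        intro A hA
        obtain ⟨hA, hjA⟩ := mem_filter.1 hA
        obtain ⟨hA, hiA⟩ := mem_filter.1 hA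
        refine ⟨by simp [hcard A hA], ?_⟩
        ext y; simp only [mem_inter, mem_insert, mem_singleton, notMem_empty, iff_false]
        rintro ⟨hy, rfl | rfl⟩ <;> contradiction)
      (by
        intro A hA
        obtain ⟨hA, hjA⟩ := mem_filter.1 hA
        obtain ⟨hA, hiA⟩ := mem_filter.1 hA
        refine ⟨by rw [hDc, hcard A hA], ?_⟩
        apply inter_eq_right.2
        intro y; simp only [mem_insert, mem_singleton]
        rintro (rfl | rfl) <;> assumption)
      (fun A hA B hB => hint A (mem_filter.1 (mem_filter.1 hA).1).1 B
        (mem_filter.1 (mem_filter.1 hB).1).1)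
    have := ci1 (N := r + 2) (b := c + 1) (by omega) T' R' hTs hRs hx
      (by simp only [Nat.add_sub_cancel]; omega)
    omega
  have hPQ : #P + #Q ≤ 2 * (r + 1).choose (c + 1) := by
    obtain ⟨P', Q', hP', hQ', hPs, hQs, hx⟩ := transfer (N := r + 2) {i, j} {i} {j}
      (by rw [hDc]; omega) (by simp) (by simp) (by simp [hij]) P Q (c + 2) (c + 2)
      (by
        intro A hA
        obtain ⟨hA, hjA⟩ := mem_filter.1 hA
        obtain ⟨hA, hiA⟩ := mem_filter.1 hA
        refine ⟨by simp [hcard A hA], ?_⟩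
        ext y; simp only [mem_inter, mem_insert, mem_singleton]
        constructor
        · rintro ⟨hy, rfl | rfl⟩
          · rfl
          · contradiction
        · rintro rfl; exact ⟨hiA, Or.inl rfl⟩)
      (by
        intro A hA
        obtain ⟨hA, hjA⟩ := mem_filter.1 hA
        obtain ⟨hA, hiA⟩ := mem_filter.1 hA
        refine ⟨by simp [hcard A hA], ?_⟩
        ext y; simp only [mem_inter, mem_insert, mem_singleton]
        constructor
        · rintro ⟨hy, rfl | rfl⟩
          · contradiction
          · rfl
        · rintro rfl; exact ⟨hjA, Or.inr rfl⟩)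
      (fun A hA B hB => hint A (mem_filter.1 (mem_filter.1 hA).1).1 B
        (mem_filter.1 (mem_filter.1 hB).1).1)
    have hx' : ∀ A ∈ Q', ∀ B ∈ P', ¬ Disjoint A B := fun A hA B hB h => hx B hB A hA h.symm
    by_cases c1 : #P ≤ (r + 1).choose (c + 1)
    · have := bad_case_pq hrc P' Q' hPs hQs hx (by omega) (by omega)
      omega
    · have h3 := ci3 (N := r + 2) (b := c + 1) (by omega) P' Q' hPs hQs hx
        (by show (r + 1).choose (c + 1) ≤ _; omega)
      have h4 : #Q' ≤ (r + 1).choose (c + 1) := h3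
      have := bad_case_pq hrc Q' P' hQs hPs hx' (by omega) (by omega)
      omega
  omega

end DivAux

namespace DivAux

def Stable {n : ℕ} (F : Finset (Finset (Fin n))) : Prop :=
  ∀ i j : Fin n, i < j → ∀ S ∈ F, j ∈ S → i ∉ S → insert i (S.erase j) ∈ F

lemma rng_succ {n s : ℕ} (hs : s < n) : rng n (s + 1) = insert ⟨s, hs⟩ (rng n s) := by
  ext x
  simp only [mem_rng, mem_insert, Fin.ext_iff]
  omega

lemma inter_rng_succ_le {n : ℕ} (B : Finset (Fin n)) (s : ℕ) :
    #(B ∩ rng n (s + 1)) ≤ #(B ∩ rng n s) + 1 := by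
  by_cases hs : s < n
  · rw [rng_succ hs]
    refine (card_le_card (t := insert ⟨s, hs⟩ (B ∩ rng n s)) ?_).trans (card_insert_le _ _)
    intro x; simp only [mem_inter, mem_insert]; tauto
  · have : rng n (s + 1) = rng n s := by
      ext x; simp only [mem_rng]; have := x.2; omega
    rw [this]; omega

lemma inter_rng_mono {n : ℕ} (B : Finset (Fin n)) {s t : ℕ} (h : s ≤ t) :
    #(B ∩ rng n s) ≤ #(B ∩ rng n t) := by
  apply card_le_card
  intro x; simp only [mem_inter, mem_rng]; rintro ⟨h1, h2⟩; exact ⟨h1, by omega⟩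

lemma walk {n : ℕ} (F : Finset (Finset (Fin n))) (hst : Stable F)
    (hint : ∀ A ∈ F, ∀ B ∈ F, (A ∩ B).Nonempty) (B : Finset (Fin n)) (hB : B ∈ F) :
    ∃ s, s < 2 * #(B ∩ rng n s) := by
  by_contra hcon
  push Not at hcon
  have key : ∀ s ≤ n, ∃ C ∈ F, #(C ∩ rng n s) = #(B ∩ rng n s) ∧
      (∀ x ∈ B, x.val < s → x ∉ C) ∧ (∀ x : Fin n, s ≤ x.val → (x ∈ C ↔ x ∈ B)) := by
    intro s
    induction s with
    | zero => intro _; exact ⟨B, hB, rfl, by simp, by simp⟩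
    | succ s ih =>
      intro hs
      obtain ⟨C, hC, h1, h2, h3⟩ := ih (by omega)
      let z : Fin n := ⟨s, hs⟩
      have hzr : z ∉ rng n s := by simp [mem_rng, z]
      have hcase : ∀ x : Fin n, x.val < s + 1 → x ≠ z → x.val < s := by
        intro x hx hxz
        have : x.val ≠ s := fun h => hxz (Fin.ext h)
        omega
      by_cases hz : z ∈ B
      · have hzC : z ∈ C := (h3 z le_rfl).2 hz
        have hBz : #(B ∩ rng n (s + 1)) = #(B ∩ rng n s) + 1 := by
          rw [rng_succ hs, inter_insert_of_mem hz, card_insert_of_notMem]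
          simp [hzr, z]
        have hCz : #(C ∩ rng n (s + 1)) = #(C ∩ rng n s) + 1 := by
          rw [rng_succ hs, inter_insert_of_mem hzC, card_insert_of_notMem]
          simp [hzr, z]
        have hlt : #((C ∩ rng n s) ∪ (B ∩ rng n s)) < #(rng n s) := by
          refine (card_union_le _ _).trans_lt ?_
          rw [card_rng (by omega)]
          have := hcon (s + 1)
          omega
        obtain ⟨y, hy, hy'⟩ := exists_mem_notMem_of_card_lt_card hlt
        simp only [mem_union, mem_inter, hy, and_true, not_or] at hy'
        have hys := mem_rng.1 hy
        have hyz : y < z := by rw [Fin.lt_def]; exact hys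
        refine ⟨insert y (C.erase z), hst y z hyz C hC hzC hy'.1, ?_, ?_, ?_⟩
        · rw [hBz, ← h1]
          have : insert y (C.erase z) ∩ rng n (s + 1) = insert y (C ∩ rng n s) := by
            ext x
            simp only [mem_inter, mem_insert, mem_erase, mem_rng]
            constructor
            · rintro ⟨rfl | ⟨h4, h5⟩, h6⟩
              · exact Or.inl rfl
              · exact Or.inr ⟨h5, hcase x h6 h4⟩
            · rintro (rfl | ⟨h4, h5⟩)
              · exact ⟨Or.inl rfl, by omega⟩
              · exact ⟨Or.inr ⟨fun h => by rw [h] at h5; exact absurd h5 (lt_irrefl s), h4⟩,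
                  by omega⟩
          rw [this, card_insert_of_notMem (fun h => hy'.1 (mem_inter.1 h).1)]
        · intro x hx hxs
          simp only [mem_insert, mem_erase, not_or, not_and]
          refine ⟨fun h => hy'.2 (h ▸ hx), fun hxz => h2 x hx (hcase x hxs hxz)⟩
        · intro x hxs
          have hxz : x ≠ z := fun h => by rw [h] at hxs; simp [z] at hxs
          have hxy : x ≠ y := fun h => by rw [h] at hxs; omega
          simp only [mem_insert, mem_erase, hxz, hxy, false_or, ne_eq, not_false_eq_true, true_and]
          exact h3 x (by omega)
      · have hzC : z ∉ C := fun h => hz ((h3 z le_rfl).1 h)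
        refine ⟨C, hC, ?_, ?_, ?_⟩
        · rw [rng_succ hs, inter_insert_of_notMem hzC, inter_insert_of_notMem hz, h1]
        · intro x hx hxs
          exact h2 x hx (hcase x hxs (fun h => hz (h ▸ hx)))
        · intro x hxs; exact h3 x (by omega)
  obtain ⟨C, hC, -, h2, -⟩ := key n le_rfl
  obtain ⟨x, hx⟩ := hint B hB C hC
  exact h2 x (mem_inter.1 hx).1 x.2 (mem_inter.1 hx).2

/-- `B` first crosses the diagonal at `s`. -/
def FirstB {n : ℕ} (s : ℕ) (B : Finset (Fin n)) : Prop :=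
  s < 2 * #(B ∩ rng n s) ∧ ∀ t < s, 2 * #(B ∩ rng n t) ≤ t

def FirstA {n : ℕ} (s : ℕ) (A : Finset (Fin n)) : Prop :=
  2 * #(A ∩ rng n s) < s ∧ ∀ t < s, t ≤ 2 * #(A ∩ rng n t)

lemma firstB_eq {n s : ℕ} {B : Finset (Fin n)} (h : FirstB s B) :
    2 * #(B ∩ rng n s) = s + 1 := by
  obtain ⟨h1, h2⟩ := h
  cases s with
  | zero => simp [rng] at h1
  | succ s =>
    have := h2 s (by omega)
    have := inter_rng_succ_le B s
    omega

lemma firstA_eq {n s : ℕ} {A : Finset (Fin n)} (h : FirstA s A) :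
    2 * #(A ∩ rng n s) + 1 = s := by
  obtain ⟨h1, h2⟩ := h
  cases s with
  | zero => omega
  | succ s =>
    have := h2 s (by omega)
    have := inter_rng_mono A (Nat.le_succ s)
    simp only [Nat.succ_eq_add_one] at this
    omega

open Classical in
lemma level {n k s : ℕ} (hn : 2 * k < n) (z : Fin n) (hz : z.val = 0)
    (F : Finset (Finset (Fin n))) (hcard : ∀ A ∈ F, #A = k)
    (hint : ∀ A ∈ F, ∀ B ∈ F, (A ∩ B).Nonempty) :
    #((F.filter (fun B => z ∉ B)).filter (fun B => FirstB s B)) * (n - k - 1) ≤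
      #(((powersetCard k univ).filter (fun A => z ∈ A ∧ A ∉ F)).filter (fun A => FirstA s A))
        * (k - 1) := by
  set X := (F.filter (fun B => z ∉ B)).filter (fun B => FirstB s B) with hX
  set Y := ((powersetCard k univ).filter (fun A => z ∈ A ∧ A ∉ F)).filter
    (fun A => FirstA s A) with hY
  rcases X.eq_empty_or_nonempty with h | ⟨B0, hB0⟩
  · rw [h]; simp
  have hXmem : ∀ B, B ∈ X ↔ (B ∈ F ∧ z ∉ B) ∧ FirstB s B := by
    intro B; rw [hX, mem_filter, mem_filter]
  have hYmem : ∀ A, A ∈ Y ↔ (#A = k ∧ z ∈ A ∧ A ∉ F) ∧ FirstA s A := by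
    intro A; rw [hY, mem_filter, mem_filter]; simp
  obtain ⟨⟨hB0F, hzB0⟩, hB0f⟩ := (hXmem B0).1 hB0
  obtain ⟨i, hi⟩ : ∃ i, i = #(B0 ∩ rng n s) := ⟨_, rfl⟩
  have hs : s + 1 = 2 * i := by rw [hi, firstB_eq hB0f]
  have hik : i ≤ k := by
    rw [hi, ← hcard B0 hB0F]; exact card_le_card inter_subset_left
  have hi2 : 2 ≤ i := by
    by_contra h
    have h1 : s = 1 := by omega
    have h2 : i = 1 := by omega
    have : (B0 ∩ rng n s) = ∅ := by
      ext x
      simp only [mem_inter, mem_rng, notMem_empty, iff_false, not_and]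
      intro hx hxs
      apply hzB0
      have : x = z := Fin.ext (by omega)
      exact this ▸ hx
    rw [this, card_empty] at hi
    omega
  have hsn : s ≤ n := by omega
  have main : #X * (n - k - i + 1).choose (k - i + 1) ≤ #Y * (n - k - i).choose (k - i) := by
    refine card_mul_le_card_mul (fun B A => Disjoint B A ∧ rng n s ⊆ B ∪ A) ?_ ?_
    · intro B hB
      obtain ⟨⟨hBF, hzB⟩, hBf⟩ := (hXmem B).1 hB
      have hBi : #(B ∩ rng n s) = i := by have := firstB_eq hBf; omega
      have hBk := hcard B hBF
      have hun : #(rng n s ∪ B) = s + k - i := by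
        have := card_union_add_card_inter (rng n s) B
        rw [inter_comm, hBi, card_rng hsn, hBk] at this
        omega
      have hco : #(rng n s ∪ B)ᶜ = n - k - i + 1 := by
        rw [card_compl, hun, Fintype.card_fin]; omega
      rw [← hco, ← card_powersetCard]
      refine card_le_card_of_injOn (fun U => (rng n s \ B) ∪ U) ?_ ?_
      · intro U hU
        obtain ⟨hU1, hU2⟩ := mem_powersetCard.1 (mem_coe.1 hU)
        have hUr : ∀ x ∈ U, x ∉ rng n s ∧ x ∉ B := by
          intro x hx
          have := hU1 hx
          simpa [not_or] using this
        have hdis : Disjoint B ((rng n s \ B) ∪ U) := by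
          rw [disjoint_left]
          intro x hx hx'
          rcases mem_union.1 hx' with h | h
          · exact (mem_sdiff.1 h).2 hx
          · exact (hUr x h).2 hx
        have hpre : ∀ t ≤ s, #(((rng n s \ B) ∪ U) ∩ rng n t) + #(B ∩ rng n t) = t := by
          intro t ht
          have e : ((rng n s \ B) ∪ U) ∩ rng n t = rng n t \ B := by
            ext x
            simp only [mem_inter, mem_union, mem_sdiff]
            constructor
            · rintro ⟨h | h, h'⟩
              · exact ⟨h', h.2⟩
              · exact absurd (mem_rng.2 ((mem_rng.1 h').trans_le ht)) (hUr x h).1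
            · rintro ⟨h, h'⟩
              exact ⟨Or.inl ⟨mem_rng.2 ((mem_rng.1 h).trans_le ht), h'⟩, h⟩
          rw [e, inter_comm, card_sdiff_add_card_inter, card_rng (by omega)]
        have hAs := hpre s le_rfl
        simp only [mem_coe, mem_bipartiteAbove]
        refine ⟨(hYmem _).2 ⟨⟨?_, ?_, ?_⟩, ?_, ?_⟩, hdis, ?_⟩
        · rw [card_union_of_disjoint, hU2]
          · have := card_sdiff_add_card_inter (rng n s) B
            rw [inter_comm, hBi, card_rng hsn] at this
            omega
          · rw [disjoint_left]
            intro x hx hx'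
            exact (hUr x hx').1 (mem_sdiff.1 hx).1
        · exact mem_union_left _ (mem_sdiff.2 ⟨mem_rng.2 (by omega), hzB⟩)
        · intro hF
          obtain ⟨x, hx⟩ := hint B hBF _ hF
          exact disjoint_left.1 hdis (mem_inter.1 hx).1 (mem_inter.1 hx).2
        · omega
        · intro t ht
          have := hpre t ht.le
          have := hBf.2 t ht
          omega
        · intro x hx
          simp only [mem_union, mem_sdiff]
          tauto
      · intro U hU V hV h
        have hd : ∀ U ∈ powersetCard (k - i + 1) (rng n s ∪ B)ᶜ,
            ((rng n s \ B) ∪ U) \ rng n s = U := by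
          intro U hU
          ext x
          simp only [mem_sdiff, mem_union]
          constructor
          · rintro ⟨h | h, h'⟩
            · exact absurd h.1 h'
            · exact h
          · intro h
            refine ⟨Or.inr h, fun h' => ?_⟩
            have := (mem_powersetCard.1 hU).1 h
            rw [mem_compl] at this
            exact this (mem_union_left _ h')
        simp only at h
        rw [← hd U hU, h, hd V hV]
    · intro A hA
      obtain ⟨⟨hAk, hzA, hAF⟩, hAf⟩ := (hYmem A).1 hA
      have hAi := firstA_eq hAf
      have hun : #(rng n s ∪ A) = s + k - (i - 1) := by
        have := card_union_add_card_inter (rng n s) A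
        rw [inter_comm, card_rng hsn, hAk] at this
        omega
      have hco : #(rng n s ∪ A)ᶜ = n - k - i := by
        rw [card_compl, hun, Fintype.card_fin]; omega
      rw [← hco, ← card_powersetCard]
      have hpre : ∀ B ∈ X, Disjoint B A → rng n s ⊆ B ∪ A → B ∩ rng n s = rng n s \ A := by
        intro B hB hd hsub
        ext x
        simp only [mem_inter, mem_sdiff]
        constructor
        · rintro ⟨h, h'⟩; exact ⟨h', disjoint_left.1 hd h⟩
        · rintro ⟨h, h'⟩
          rcases mem_union.1 (hsub h) with h'' | h''
          · exact ⟨h'', h⟩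
          · exact absurd h'' h'
      refine card_le_card_of_injOn (fun B => B \ rng n s) ?_ ?_
      · intro B hB
        obtain ⟨hB, hd, hsub⟩ := (mem_bipartiteBelow _).1 (mem_coe.1 hB)
        obtain ⟨⟨hBF, hzB⟩, hBf⟩ := (hXmem B).1 hB
        have hBi := firstB_eq hBf
        have hBk := hcard B hBF
        refine mem_coe.2 (mem_powersetCard.2 ⟨?_, ?_⟩)
        · intro x hx
          obtain ⟨h1, h2⟩ := mem_sdiff.1 hx
          rw [mem_compl, mem_union, not_or]
          exact ⟨h2, disjoint_left.1 hd h1⟩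
        · have := card_sdiff_add_card_inter B (rng n s)
          simp only
          omega
      · intro B hB B' hB' h
        obtain ⟨hB, hd, hsub⟩ := (mem_bipartiteBelow _).1 (mem_coe.1 hB)
        obtain ⟨hB', hd', hsub'⟩ := (mem_bipartiteBelow _).1 (mem_coe.1 hB')
        simp only at h
        rw [← sdiff_union_inter B (rng n s), ← sdiff_union_inter B' (rng n s), h,
          hpre B hB hd hsub, hpre B' hB' hd' hsub']
  have hid := Nat.add_one_mul_choose_eq (n - k - i) (k - i)
  have hpos : 0 < (n - k - i).choose (k - i) := Nat.choose_pos (by omega)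
  have h1 : #X * (n - k - i + 1) ≤ #Y * (k - i + 1) := by
    refine Nat.le_of_mul_le_mul_right ?_ hpos
    calc #X * (n - k - i + 1) * (n - k - i).choose (k - i)
        = #X * (n - k - i + 1).choose (k - i + 1) * (k - i + 1) := by
          rw [mul_assoc, hid, mul_assoc]
      _ ≤ #Y * (n - k - i).choose (k - i) * (k - i + 1) := Nat.mul_le_mul_right _ main
      _ = _ := by ring
  have h2 : #X ≤ #Y := by
    refine Nat.le_of_mul_le_mul_right (c := n - k - i + 1) ?_ (by omega)
    exact h1.trans (Nat.mul_le_mul_left _ (by omega))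
  have e1 : n - k - 1 = (n - k - i + 1) + (i - 2) := by omega
  have e2 : k - 1 = (k - i + 1) + (i - 2) := by omega
  rw [e1, e2, mul_add _ (n - k - i + 1), mul_add _ (k - i + 1)]
  exact Nat.add_le_add h1 (Nat.mul_le_mul_right _ h2)

end DivAux

namespace DivAux

open Classical in
lemma stable_count {n k : ℕ} (hn : 2 * k < n) (z : Fin n) (hz : z.val = 0)
    (F : Finset (Finset (Fin n))) (hst : Stable F) (hcard : ∀ A ∈ F, #A = k)
    (hint : ∀ A ∈ F, ∀ B ∈ F, (A ∩ B).Nonempty) :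
    #(F.filter (fun B => z ∉ B)) * (n - k - 1) ≤
      #((powersetCard k univ).filter (fun A => z ∈ A ∧ A ∉ F)) * (k - 1) := by
  set X := F.filter (fun B => z ∉ B) with hX
  set Y := (powersetCard k univ).filter (fun A => z ∈ A ∧ A ∉ F) with hY
  have hbound : ∀ B ∈ X, ∃ s ∈ range (2 * n + 1), FirstB s B := by
    intro B hB
    have hw := walk F hst hint B (mem_filter.1 hB).1
    have hf : FirstB (Nat.find hw) B := by
      refine ⟨Nat.find_spec hw, fun t ht => ?_⟩
      have := Nat.find_min hw ht
      omega
    refine ⟨_, ?_, hf⟩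
    have h1 := hf.1
    have h2 : #(B ∩ rng n (Nat.find hw)) ≤ n := by
      simpa using card_le_univ (B ∩ rng n (Nat.find hw))
    rw [mem_range]; omega
  have hXs : #X ≤ ∑ s ∈ range (2 * n + 1), #(X.filter (fun B => FirstB s B)) := by
    refine (card_le_card ?_).trans card_biUnion_le
    intro B hB
    obtain ⟨s, hs, hf⟩ := hbound B hB
    exact mem_biUnion.2 ⟨s, hs, mem_filter.2 ⟨hB, hf⟩⟩
  have hYs : ∑ s ∈ range (2 * n + 1), #(Y.filter (fun A => FirstA s A)) ≤ #Y := by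
    rw [← card_biUnion]
    · apply card_le_card
      intro A hA
      obtain ⟨s, -, h⟩ := mem_biUnion.1 hA
      exact (mem_filter.1 h).1
    · intro s _ t _ hst
      rw [Function.onFun, disjoint_left]
      intro A hA hA'
      have h1 := (mem_filter.1 hA).2
      have h2 := (mem_filter.1 hA').2
      rcases lt_or_gt_of_ne hst with h | h
      · have := h2.2 s h
        have := h1.1
        omega
      · have := h1.2 t h
        have := h2.1
        omega
  calc #X * (n - k - 1)
      ≤ (∑ s ∈ range (2 * n + 1), #(X.filter (fun B => FirstB s B))) * (n - k - 1) :=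
        Nat.mul_le_mul_right _ hXs
    _ = ∑ s ∈ range (2 * n + 1), #(X.filter (fun B => FirstB s B)) * (n - k - 1) := sum_mul _ _ _
    _ ≤ ∑ s ∈ range (2 * n + 1), #(Y.filter (fun A => FirstA s A)) * (k - 1) :=
        sum_le_sum fun s _ => level hn z hz F hcard hint
    _ = (∑ s ∈ range (2 * n + 1), #(Y.filter (fun A => FirstA s A))) * (k - 1) :=
        (sum_mul _ _ _).symm
    _ ≤ _ := Nat.mul_le_mul_right _ hYs

lemma stable_case {r c : ℕ} (hrc : 2 * c + 2 < r) (F : Finset (Finset (Fin (r + 4))))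
    (hcard : ∀ A ∈ F, #A = c + 3) (hint : ∀ A ∈ F, ∀ B ∈ F, (A ∩ B).Nonempty)
    (hst : Stable F)
    (h1 : (r + 1).choose (c + 1) ≤ #(F.filter (fun A => (0 : Fin (r + 4)) ∉ A))) :
    #F ≤ (r + 2).choose (c + 1) + 2 * (r + 1).choose (c + 1) := by
  have h := stable_count (n := r + 4) (k := c + 3) (by omega) 0 rfl F hst hcard hint
  have hsp := card_split F 0
  have htot : #((powersetCard (c + 3) univ).filter (fun A => (0 : Fin (r + 4)) ∈ A ∧ A ∉ F))
      + #(F.filter (fun A => (0 : Fin (r + 4)) ∈ A)) ≤ (r + 3).choose (c + 2) := by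
    have e := card_split (powersetCard (c + 3) (univ : Finset (Fin (r + 4)))) 0
    have e1 : (powersetCard (c + 3) (univ : Finset (Fin (r + 4)))).filter (fun A => 0 ∉ A)
        = powersetCard (c + 3) (univ.erase 0) := by
      ext A
      simp only [mem_filter, mem_powersetCard, subset_univ, true_and]
      constructor
      · rintro ⟨h, h'⟩
        exact ⟨fun x hx => mem_erase.2 ⟨fun hx0 => h' (hx0 ▸ hx), mem_univ _⟩, h⟩
      · rintro ⟨h, h'⟩
        exact ⟨h', fun h0 => (mem_erase.1 (h h0)).1 rfl⟩
    rw [e1, card_powersetCard, card_powersetCard, card_erase_of_mem (mem_univ _), card_univ,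
      Fintype.card_fin] at e
    have e2 : (r + 4).choose (c + 3) = (r + 3).choose (c + 2) + (r + 3).choose (c + 3) :=
      Nat.choose_succ_succ _ _
    have e3 : r + 4 - 1 = r + 3 := rfl
    rw [e3] at e
    have e4 : #((powersetCard (c + 3) (univ : Finset (Fin (r + 4)))).filter (fun A => 0 ∈ A))
        = (r + 3).choose (c + 2) := by omega
    rw [← e4, ← card_union_of_disjoint]
    · apply card_le_card
      intro A hA
      rcases mem_union.1 hA with hA | hA
      · obtain ⟨h, h', -⟩ := mem_filter.1 hA
        exact mem_filter.2 ⟨h, h'⟩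
      · obtain ⟨h, h'⟩ := mem_filter.1 hA
        exact mem_filter.2 ⟨mem_powersetCard.2 ⟨subset_univ _, hcard A h⟩, h'⟩
    · rw [disjoint_left]
      intro A hA hA'
      exact (mem_filter.1 hA).2.2 (mem_filter.1 hA').1
  set β := #(F.filter (fun A => (0 : Fin (r + 4)) ∉ A))
  set α := #(F.filter (fun A => (0 : Fin (r + 4)) ∈ A))
  set μ := #((powersetCard (c + 3) univ).filter (fun A => (0 : Fin (r + 4)) ∈ A ∧ A ∉ F))
  have hY : (r + 1).choose (c + 2) * (c + 2) = (r + 1).choose (c + 1) * (r - c) := by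
    have := Nat.choose_succ_right_eq (r + 1) (c + 1)
    rw [this]; congr 1; omega
  have g1 : (r + 3).choose (c + 2) = (r + 2).choose (c + 1) + (r + 2).choose (c + 2) :=
    Nat.choose_succ_succ _ _
  have g2 : (r + 2).choose (c + 2) = (r + 1).choose (c + 1) + (r + 1).choose (c + 2) :=
    Nat.choose_succ_succ _ _
  set Z := (r + 1).choose (c + 1)
  set Y := (r + 1).choose (c + 2)
  have e1 : r + 4 - (c + 3) - 1 = r - c := by omega
  have e2 : c + 3 - 1 = c + 2 := by omega
  rw [e1, e2] at h
  obtain ⟨d, hd⟩ : ∃ d, r - c = c + 2 + d := ⟨r - c - (c + 2), by omega⟩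
  rw [hd] at h hY
  have key : β + Y ≤ μ + Z := by
    refine Nat.le_of_mul_le_mul_right (c := c + 2) ?_ (by omega)
    nlinarith [Nat.mul_le_mul_right d h1]
  omega

/-- Shifting map. -/
def shf {n : ℕ} (F : Finset (Finset (Fin n))) (i j : Fin n) (S : Finset (Fin n)) :
    Finset (Fin n) :=
  if j ∈ S ∧ i ∉ S ∧ insert i (S.erase j) ∉ F then insert i (S.erase j) else S

lemma shf_cases {n : ℕ} (F : Finset (Finset (Fin n))) (i j : Fin n) (S : Finset (Fin n)) :
    (j ∈ S ∧ i ∉ S ∧ insert i (S.erase j) ∉ F ∧ shf F i j S = insert i (S.erase j)) ∨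
    ((j ∈ S → i ∉ S → insert i (S.erase j) ∈ F) ∧ shf F i j S = S) := by
  unfold shf
  split_ifs with h
  · exact Or.inl ⟨h.1, h.2.1, h.2.2, rfl⟩
  · refine Or.inr ⟨fun h1 h2 => ?_, rfl⟩
    by_contra h3
    exact h ⟨h1, h2, h3⟩

lemma shf_inj {n : ℕ} (F : Finset (Finset (Fin n))) (i j : Fin n) :
    Set.InjOn (shf F i j) F := by
  intro A hA B hB h
  rcases shf_cases F i j A with ⟨a1, a2, a3, a4⟩ | ⟨-, a4⟩ <;>
  rcases shf_cases F i j B with ⟨b1, b2, b3, b4⟩ | ⟨-, b4⟩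
  · rw [a4, b4] at h
    have h1 : A.erase j = B.erase j := by
      rw [← erase_insert (a := i) (s := A.erase j) (by simp [a2]), h,
        erase_insert (by simp [b2])]
    rw [← insert_erase a1, h1, insert_erase b1]
  · rw [a4, b4] at h
    exact absurd (h ▸ hB) a3
  · rw [a4, b4] at h
    exact absurd (h ▸ hA) b3
  · rwa [a4, b4] at h

lemma shf_card {n : ℕ} (F : Finset (Finset (Fin n))) (i j : Fin n) (S : Finset (Fin n)) :
    #(shf F i j S) = #S := by
  rcases shf_cases F i j S with ⟨a1, a2, a3, a4⟩ | ⟨-, a4⟩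
  · rw [a4, card_insert_of_notMem (by simp [a2]), card_erase_add_one a1]
  · rw [a4]

lemma shf_int {n : ℕ} (F : Finset (Finset (Fin n))) (i j : Fin n)
    (hint : ∀ A ∈ F, ∀ B ∈ F, (A ∩ B).Nonempty) :
    ∀ A ∈ F.image (shf F i j), ∀ B ∈ F.image (shf F i j), (A ∩ B).Nonempty := by
  have aux : ∀ A ∈ F, ∀ B ∈ F, j ∈ A → i ∉ A → (j ∈ B → i ∉ B → insert i (B.erase j) ∈ F) →
      ((insert i (A.erase j)) ∩ B).Nonempty := by
    intro A hA B hB hj hi hB'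
    by_cases hiB : i ∈ B
    · exact ⟨i, by simp [hiB]⟩
    by_cases hjB : j ∈ B
    · obtain ⟨y, hy⟩ := hint A hA _ (hB' hjB hiB)
      simp only [mem_inter, mem_insert, mem_erase] at hy
      obtain ⟨hyA, rfl | ⟨hyj, hyB⟩⟩ := hy
      · exact absurd hyA hi
      · exact ⟨y, by simp [hyA, hyj, hyB]⟩
    · obtain ⟨y, hy⟩ := hint A hA B hB
      obtain ⟨hyA, hyB⟩ := mem_inter.1 hy
      have hyj : y ≠ j := fun h => hjB (h ▸ hyB)
      exact ⟨y, by simp [hyA, hyj, hyB]⟩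
  intro A' hA' B' hB'
  obtain ⟨A, hA, rfl⟩ := mem_image.1 hA'
  obtain ⟨B, hB, rfl⟩ := mem_image.1 hB'
  rcases shf_cases F i j A with ⟨a1, a2, a3, a4⟩ | ⟨a3, a4⟩ <;>
  rcases shf_cases F i j B with ⟨b1, b2, b3, b4⟩ | ⟨b3, b4⟩ <;> rw [a4, b4]
  · exact ⟨i, by simp⟩
  · exact aux A hA B hB a1 a2 b3
  · rw [inter_comm]; exact aux B hB A hA b1 b2 a3
  · exact hint A hA B hB

lemma shf_deg {n : ℕ} (F : Finset (Finset (Fin n))) (i j x : Fin n) (hx : x ≠ i) :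
    #(F.filter (fun A => x ∉ A)) ≤ #((F.image (shf F i j)).filter (fun A => x ∉ A)) := by
  refine card_le_card_of_injOn (shf F i j) ?_ ((shf_inj F i j).mono (coe_subset.2 (filter_subset _ _)))
  intro A hA
  obtain ⟨hA, hxA⟩ := mem_filter.1 (mem_coe.1 hA)
  refine mem_coe.2 (mem_filter.2 ⟨mem_image_of_mem _ hA, ?_⟩)
  rcases shf_cases F i j A with ⟨a1, a2, a3, a4⟩ | ⟨a3, a4⟩ <;> rw [a4]
  · simp [hx, hxA]
  · exact hxA

lemma shf_T {n : ℕ} (F : Finset (Finset (Fin n))) (i j : Fin n) :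
    #((F.filter (fun A => i ∉ A)).filter (fun A => j ∉ A)) ≤
      #((F.image (shf F i j)).filter (fun A => i ∉ A)) := by
  apply card_le_card
  intro A hA
  obtain ⟨hA, hjA⟩ := mem_filter.1 hA
  obtain ⟨hA, hiA⟩ := mem_filter.1 hA
  refine mem_filter.2 ⟨mem_image.2 ⟨A, hA, ?_⟩, hiA⟩
  rcases shf_cases F i j A with ⟨a1, a2, a3, a4⟩ | ⟨a3, a4⟩
  · contradiction
  · exact a4

def pot {n : ℕ} (F : Finset (Finset (Fin n))) : ℕ := ∑ S ∈ F, ∑ x ∈ S, x.val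

lemma shf_pot {n : ℕ} (F : Finset (Finset (Fin n))) (i j : Fin n) (hij : i < j)
    (S : Finset (Fin n)) (hS : S ∈ F) (hjS : j ∈ S) (hiS : i ∉ S)
    (hSn : insert i (S.erase j) ∉ F) : pot (F.image (shf F i j)) < pot F := by
  have aux : ∀ A : Finset (Fin n), j ∈ A → i ∉ A →
      ∑ x ∈ insert i (A.erase j), x.val < ∑ x ∈ A, x.val := by
    intro A h1 h2
    rw [sum_insert (by simp [h2]), ← add_sum_erase A (fun x => x.val) h1]
    have : i.val < j.val := hij
    omega
  unfold pot
  rw [sum_image (shf_inj F i j)]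
  apply sum_lt_sum
  · intro A hA
    rcases shf_cases F i j A with ⟨a1, a2, a3, a4⟩ | ⟨a3, a4⟩ <;> rw [a4]
    exact (aux A a1 a2).le
  · refine ⟨S, hS, ?_⟩
    rcases shf_cases F i j S with ⟨a1, a2, a3, a4⟩ | ⟨a3, a4⟩
    · rw [a4]; exact aux S a1 a2
    · exact absurd (a3 hjS hiS) hSn

lemma main_aux {r c : ℕ} (hrc : 2 * c + 2 < r) (p : ℕ) :
    ∀ F : Finset (Finset (Fin (r + 4))), pot F = p →
    (∀ A ∈ F, #A = c + 3) → (∀ A ∈ F, ∀ B ∈ F, (A ∩ B).Nonempty) →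
    (∀ x, r.choose c ≤ #(F.filter (fun A => x ∉ A))) →
    #F ≤ (r + 2).choose (c + 1) + 2 * (r + 1).choose (c + 1) := by
  induction p using Nat.strong_induction_on with
  | _ p ih =>
  intro F hp hcard hint hdiv
  by_cases hmid : ∃ x, #(F.filter (fun A => x ∉ A)) ≤ (r + 1).choose (c + 1)
  · obtain ⟨x, hx⟩ := hmid
    exact mid_case hrc F hcard hint x (hdiv x) hx
  push Not at hmid
  by_cases hst : Stable F
  · exact stable_case hrc F hcard hint hst (hmid 0).le
  unfold Stable at hst
  push Not at hst
  obtain ⟨i, j, hij, S, hS, hjS, hiS, hSn⟩ := hst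
  have hlt := shf_pot F i j hij S hS hjS hiS hSn
  by_cases hd : ∀ x, r.choose c ≤ #((F.image (shf F i j)).filter (fun A => x ∉ A))
  · rw [← card_image_of_injOn (shf_inj F i j)]
    refine ih _ (hp ▸ hlt) _ rfl ?_ (shf_int F i j hint) hd
    intro A hA
    obtain ⟨A, hA', rfl⟩ := mem_image.1 hA
    rw [shf_card, hcard A hA']
  · push Not at hd
    obtain ⟨x, hx⟩ := hd
    have hxi : x = i := by
      by_contra h
      have := shf_deg F i j x h
      have := hdiv x
      omega
    rw [hxi] at hx
    exact bad_case hrc F hcard hint i j hij.ne ((shf_T F i j).trans_lt hx) (hmid i) (hmid j)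

end DivAux

end

/-- The bound (4) on intersecting families with large diversity: if `n > 2k ≥ 6`
and `F` is an intersecting family of `k`-subsets of `[n]` with diversity
`γ(F) ≥ C(n-4, k-3)`, then `|F| ≤ C(n-2, k-2) + 2·C(n-3, k-2)`. -/
theorem large_diversity_size_bound (n k : ℕ) (hk : 3 ≤ k) (hn : 2 * k < n)
    (F : Finset (Finset (Fin n)))
    (hcard : ∀ A ∈ F, A.card = k)
    (hint : ∀ A ∈ F, ∀ B ∈ F, (A ∩ B).Nonempty)
    (hdiv : (n - 4).choose (k - 3) ≤
      F.card - Finset.univ.sup (fun i : Fin n => (F.filter (fun A => i ∈ A)).card)) :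
    F.card ≤ (n - 2).choose (k - 2) + 2 * (n - 3).choose (k - 2) := by
  obtain ⟨c, rfl⟩ : ∃ c, k = c + 3 := ⟨k - 3, by omega⟩
  obtain ⟨r, rfl⟩ : ∃ r, n = r + 4 := ⟨n - 4, by omega⟩
  refine DivAux.main_aux (r := r) (c := c) (by omega) _ F rfl hcard hint ?_
  intro x
  have h1 : (F.filter (fun A => x ∈ A)).card ≤
      Finset.univ.sup (fun i : Fin (r + 4) => (F.filter (fun A => i ∈ A)).card) :=
    Finset.le_sup (f := fun i : Fin (r + 4) => (F.filter (fun A => i ∈ A)).card)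
      (Finset.mem_univ x)
  have h2 := DivAux.card_split F x
  have h3 : r.choose c ≤
      F.card - Finset.univ.sup (fun i : Fin (r + 4) => (F.filter (fun A => i ∈ A)).card) := hdiv
  omega
end

section
/- Let n > 2k > 0 and let F be an intersecting family of k-element subsets of [n]. If the diversity satisfies γ(F) ≥ C(n-u-1, n-k-1) for some integer u with 3 ≤ u ≤ k, then |F| ≤ C(n-1, k-1) + C(n-u-1, n-k-1) - C(n-u-1, k-1). -/
namespace KZ
open Finset

lemma hall {α : Type*} [DecidableEq α] (W : Finset α) (D E : Finset (Finset α)) (s l : ℕ)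
    (hD : ∀ T ∈ D, T ⊆ W ∧ #T = s) (hE : ∀ S ∈ E, S ⊆ W ∧ #S = l) (hls : l ≤ s)
    (hN : #W ≤ s + l) (hne : ∀ S ∈ E, ∀ T ∈ D, ¬ S ⊆ T) :
    #D + #E ≤ (#W).choose l := by
  have hEs : E ⊆ powersetCard l W := fun S hS => mem_powersetCard.2 (hE S hS)
  have key : #D * (s.choose l) ≤ #(powersetCard l W \ E) * (s.choose l) := by
    apply card_mul_le_card_mul (fun T S => S ⊆ T)
    · intro T hT
      have : powersetCard l T ⊆ (powersetCard l W \ E).bipartiteAbove (fun T S => S ⊆ T) T := by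
        intro S hS
        rw [mem_powersetCard] at hS
        rw [mem_bipartiteAbove, mem_sdiff, mem_powersetCard]
        exact ⟨⟨⟨hS.1.trans (hD T hT).1, hS.2⟩, fun h => hne S h T hT hS.1⟩, hS.1⟩
      have h2 := card_le_card this
      rwa [card_powersetCard, (hD T hT).2] at h2
    · intro S hS
      rw [mem_sdiff, mem_powersetCard] at hS
      obtain ⟨⟨hSW, hSl⟩, -⟩ := hS
      have h1 : #(D.bipartiteBelow (fun T S => S ⊆ T) S) ≤ #(powersetCard (s - l) (W \ S)) := by
        apply card_le_card_of_injOn (fun T => T \ S)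
        · intro T hT
          rw [mem_coe, mem_bipartiteBelow] at hT
          rw [mem_coe, mem_powersetCard]
          refine ⟨sdiff_subset_sdiff (hD T hT.1).1 le_rfl, ?_⟩
          rw [card_sdiff_of_subset hT.2, (hD T hT.1).2, hSl]
        · intro T hT T' hT' h
          rw [mem_coe, mem_bipartiteBelow] at hT hT'
          dsimp only at h
          rw [← sdiff_union_of_subset hT.2, ← sdiff_union_of_subset hT'.2, h]
      refine h1.trans ?_
      rw [card_powersetCard, card_sdiff_of_subset hSW, hSl, ← Nat.choose_symm hls]
      exact Nat.choose_le_choose _ (by omega)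
  have h3 := Nat.le_of_mul_le_mul_right key (Nat.choose_pos hls)
  rw [card_sdiff_of_subset hEs, card_powersetCard] at h3
  have := card_le_card hEs
  rw [card_powersetCard] at this
  omega

lemma hall' {α : Type*} [DecidableEq α] (W : Finset α) (z : α) (hz : z ∉ W)
    (D E : Finset (Finset α)) (s l : ℕ)
    (hD : ∀ T ∈ D, z ∈ T ∧ T ⊆ insert z W ∧ #T = s + 1)
    (hE : ∀ S ∈ E, z ∈ S ∧ S ⊆ insert z W ∧ #S = l + 1) (hls : l ≤ s)
    (hN : #W ≤ s + l) (hne : ∀ S ∈ E, ∀ T ∈ D, ¬ S ⊆ T) :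
    #D + #E ≤ (#W).choose l := by
  have inj : ∀ (D : Finset (Finset α)), (∀ T ∈ D, z ∈ T) → #(D.image (fun T => T.erase z)) = #D := by
    intro D hD
    apply card_image_of_injOn
    intro T hT T' hT' h
    dsimp only at h
    rw [← insert_erase (hD T hT), ← insert_erase (hD T' hT'), h]
  rw [← inj D (fun T hT => (hD T hT).1), ← inj E (fun T hT => (hE T hT).1)]
  apply hall W _ _ s l _ _ hls hN
  · simp only [mem_image]
    rintro _ ⟨S, hS, rfl⟩ _ ⟨T, hT, rfl⟩ h
    apply hne S hS T hT
    rw [← insert_erase (hE S hS).1, ← insert_erase (hD T hT).1]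
    exact insert_subset_insert _ h
  · simp only [mem_image]
    rintro _ ⟨T, hT, rfl⟩
    refine ⟨?_, by rw [card_erase_of_mem (hD T hT).1, (hD T hT).2.2]; rfl⟩
    rw [← subset_insert_iff]; exact (hD T hT).2.1
  · simp only [mem_image]
    rintro _ ⟨T, hT, rfl⟩
    refine ⟨?_, by rw [card_erase_of_mem (hE T hT).1, (hE T hT).2.2]; rfl⟩
    rw [← subset_insert_iff]; exact (hE T hT).2.1

/-- the elements of `Fin m` except the top `j` ones -/
def low (m j : ℕ) : Finset (Fin m) := univ.filter (fun i => (i : ℕ) + j < m)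

lemma mem_low {m j : ℕ} {i : Fin m} : i ∈ low m j ↔ (i : ℕ) + j < m := by simp [low]

lemma card_low (m j : ℕ) : #(low m j) = m - j := by
  have : (low m j).map Fin.valEmbedding = range (m - j) := by
    ext a
    simp only [mem_map, mem_low, Fin.valEmbedding_apply, mem_range]
    constructor
    · rintro ⟨i, hi, rfl⟩; omega
    · intro h; exact ⟨⟨a, by omega⟩, by simp; omega, rfl⟩
  rw [← card_map, this, card_range]

lemma step (m k u : ℕ) (hm : 2 * k ≤ m) (hu : 2 ≤ u) (huk : u + 1 ≤ k)
    (A C : Finset (Finset (Fin m))) (hA : ∀ S ∈ A, #S = k - 1) (hC : ∀ T ∈ C, #T = m - k)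
    (hne : ∀ S ∈ A, ∀ T ∈ C, ¬ S ⊆ T) :
    #(A.filter (· ⊆ low m u)) + #(C.filter (· ⊆ low m u)) ≤
    #(A.filter (· ⊆ low m (u+1))) + #(C.filter (· ⊆ low m (u+1))) + (m - (u + 1)).choose (k - 2) := by
  set z : Fin m := ⟨m - (u + 1), by omega⟩ with hz
  have hlow : low m u = insert z (low m (u+1)) := by
    ext i; simp only [mem_low, mem_insert, Fin.ext_iff, hz]; omega
  have hzn : z ∉ low m (u+1) := by simp only [mem_low, hz]; omega
  have split : ∀ X : Finset (Finset (Fin m)), #(X.filter (· ⊆ low m u)) =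
      #(X.filter (· ⊆ low m (u+1))) + #(X.filter (fun S => z ∈ S ∧ S ⊆ low m u)) := by
    intro X
    rw [← card_union_of_disjoint]
    · congr 1
      ext S
      simp only [mem_union, mem_filter, hlow]
      by_cases hzS : z ∈ S
      · have : ¬ S ⊆ low m (u+1) := fun h => hzn (h hzS)
        tauto
      · rw [subset_insert_iff_of_notMem hzS]; tauto
    · rw [disjoint_left]
      intro S hS hS'
      simp only [mem_filter] at hS hS'
      exact hzn (hS.2 hS'.2.1)
  rw [split A, split C]
  have := hall' (low m (u+1)) z hzn (C.filter (fun S => z ∈ S ∧ S ⊆ low m u))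
    (A.filter (fun S => z ∈ S ∧ S ⊆ low m u)) (m - k - 1) (k - 2)
    (by
      intro T hT
      simp only [mem_filter] at hT
      exact ⟨hT.2.1, hlow ▸ hT.2.2, by rw [hC T hT.1]; omega⟩)
    (by
      intro T hT
      simp only [mem_filter] at hT
      exact ⟨hT.2.1, hlow ▸ hT.2.2, by rw [hA T hT.1]; omega⟩)
    (by omega) (by rw [card_low]; omega)
    (fun S hS T hT => hne S (mem_filter.1 hS).1 T (mem_filter.1 hT).1)
  rw [card_low] at this
  omega

lemma steps (m k u : ℕ) (hm : 2 * k ≤ m) (hu : 2 ≤ u) (huk : u ≤ k)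
    (A C : Finset (Finset (Fin m))) (hA : ∀ S ∈ A, #S = k - 1) (hC : ∀ T ∈ C, #T = m - k)
    (hne : ∀ S ∈ A, ∀ T ∈ C, ¬ S ⊆ T) :
    #(A.filter (· ⊆ low m 2)) + #(C.filter (· ⊆ low m 2)) + (m - u).choose (k - 1) ≤
    #(A.filter (· ⊆ low m u)) + #(C.filter (· ⊆ low m u)) + (m - 2).choose (k - 1) := by
  induction u, hu using Nat.le_induction with
  | base => rfl
  | succ u hu ih =>
    have h1 := ih (by omega)
    have h2 := step m k u hm hu huk A C hA hC hne
    have h3 : (m - u).choose (k - 1) = (m - (u+1)).choose (k - 2) + (m - (u+1)).choose (k - 1) := by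
      obtain ⟨a, ha⟩ : ∃ a, m - u = a + 1 := ⟨m - u - 1, by omega⟩
      obtain ⟨b, hb⟩ : ∃ b, k - 1 = b + 1 := ⟨k - 2, by omega⟩
      rw [ha, hb, show m - (u+1) = a by omega, show k - 2 = b by omega, Nat.choose_succ_succ]
    omega

/-- sets not inside a given ground set -/
lemma card_not_subset {m a : ℕ} (W : Finset (Fin m)) (A : Finset (Finset (Fin m)))
    (hA : ∀ S ∈ A, #S = a) :
    #A + (#W).choose a ≤ #(A.filter (· ⊆ W)) + m.choose a := by
  have h1 : #(A.filter (fun S => ¬ S ⊆ W)) ≤ #(powersetCard a (univ : Finset (Fin m)) \ powersetCard a W) := by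
    apply card_le_card
    intro S hS
    simp only [mem_filter] at hS
    simp only [mem_sdiff, mem_powersetCard]
    exact ⟨⟨subset_univ _, hA S hS.1⟩, fun h => hS.2 h.1⟩
  have hsub : powersetCard a W ⊆ powersetCard a (univ : Finset (Fin m)) :=
    powersetCard_mono (subset_univ _)
  rw [card_sdiff_of_subset hsub] at h1
  have h2 := card_le_card hsub
  simp only [card_powersetCard, card_univ, Fintype.card_fin] at h1 h2
  have := card_filter_add_card_filter_not (s := A) (p := (· ⊆ W))
  omega

/-- no set of `A` inside the ground set `low m u` if all of its `r`-subsets are in `C`. -/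
lemma empty_of_full (m a r : ℕ) (W : Finset (Fin m)) (hrW : r ≤ #W) (har : a ≤ r)
    (A C : Finset (Finset (Fin m))) (hA : ∀ S ∈ A, #S = a)
    (hne : ∀ S ∈ A, ∀ T ∈ C, ¬ S ⊆ T) (hfull : powersetCard r W ⊆ C) :
    A.filter (· ⊆ W) = ∅ := by
  rw [filter_eq_empty_iff]
  intro S hS hSW
  obtain ⟨T, hST, hTW, hT⟩ := exists_subsuperset_card_eq hSW (n := r) (by rw [hA S hS]; exact har) hrW
  exact hne S hS T (hfull (mem_powersetCard.2 ⟨hTW, hT⟩)) hST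

lemma window1' (m k u : ℕ) (hm : 2 * k ≤ m) (hu : 2 ≤ u) (huk : u ≤ k)
    (A C : Finset (Finset (Fin m))) (hA : ∀ S ∈ A, #S = k - 1) (hC : ∀ T ∈ C, #T = m - k)
    (hne : ∀ S ∈ A, ∀ T ∈ C, ¬ S ⊆ T)
    (h1 : powersetCard (m - k) (low m u) ⊆ C) (h2 : C ⊆ powersetCard (m - k) (low m 2)) :
    #A + #C + (m - u).choose (k - 1) ≤ m.choose (k - 1) + (m - u).choose (m - k) := by
  have e1 := steps m k u hm hu huk A C hA hC hne
  rw [empty_of_full m (k-1) (m-k) (low m u) (by rw [card_low]; omega) (by omega) A C hA hne h1] at e1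
  have e2 : C.filter (· ⊆ low m 2) = C :=
    filter_eq_self.2 (fun T hT => (mem_powersetCard.1 (h2 hT)).1)
  have e3 : C.filter (· ⊆ low m u) ⊆ powersetCard (m - k) (low m u) := by
    intro T hT
    rw [mem_filter] at hT
    exact mem_powersetCard.2 ⟨hT.2, hC T hT.1⟩
  have e3 := card_le_card e3
  rw [card_powersetCard, card_low] at e3
  have e4 := card_not_subset (low m 2) A hA
  rw [card_low] at e4
  rw [e2, card_empty] at e1
  omega

def Q (m r : ℕ) (h : 3 ≤ m) : Finset (Finset (Fin m)) :=
  (powersetCard r (low m 1)).filter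
    (fun T => ¬ ((⟨m - 2, by omega⟩ : Fin m) ∈ T ∧ (⟨m - 3, by omega⟩ : Fin m) ∈ T))

lemma low_succ (m u : ℕ) (h : u + 1 ≤ m) : low m u = insert ⟨m - (u + 1), by omega⟩ (low m (u+1)) := by
  ext i; simp only [mem_low, mem_insert, Fin.ext_iff]; omega

lemma window2' (m k : ℕ) (hm : 2 * k ≤ m) (hk : 3 ≤ k)
    (A C : Finset (Finset (Fin m))) (hA : ∀ S ∈ A, #S = k - 1) (hC : ∀ T ∈ C, #T = m - k)
    (hne : ∀ S ∈ A, ∀ T ∈ C, ¬ S ⊆ T)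
    (h1 : powersetCard (m - k) (low m 2) ⊆ C) (h2 : C ⊆ Q m (m - k) (by omega)) :
    #A + #C + (m - 2).choose (k - 1) ≤ m.choose (k - 1) + (m - 2).choose (m - k) := by
  set z : Fin m := ⟨m - 2, by omega⟩ with hz
  have hzn : z ∉ low m 3 := by simp only [mem_low, hz]; omega
  have hz2 : z ∉ low m 2 := by simp only [mem_low, hz]; omega
  have e1 := empty_of_full m (k-1) (m-k) (low m 2) (by rw [card_low]; omega) (by omega) A C hA hne h1
  have e2 := hall' (low m 3) z hzn (C.filter (z ∈ ·))
    (A.filter (fun S => z ∈ S ∧ S ⊆ insert z (low m 3))) (m - k - 1) (k - 2)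
    (by
      intro T hT
      simp only [mem_filter] at hT
      refine ⟨hT.2, ?_, by rw [hC T hT.1]; omega⟩
      have := h2 hT.1
      simp only [Q, mem_filter, mem_powersetCard] at this
      intro i hi
      have hi1 := this.1.1 hi
      have hi3 : i ≠ ⟨m - 3, by omega⟩ := by
        rintro rfl
        exact this.2 ⟨hT.2, hi⟩
      simp only [mem_insert, mem_low, Fin.ext_iff, hz, ne_eq] at hi1 hi3 ⊢
      omega)
    (by
      intro T hT
      simp only [mem_filter] at hT
      exact ⟨hT.2.1, hT.2.2, by rw [hA T hT.1]; omega⟩)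
    (by omega) (by rw [card_low]; omega)
    (fun S hS T hT => hne S (mem_filter.1 hS).1 T (mem_filter.1 hT).1)
  rw [card_low] at e2
  have e3 : #(C.filter (fun T => ¬ z ∈ T)) ≤ (m - 2).choose (m - k) := by
    rw [← card_low m 2, ← card_powersetCard]
    apply card_le_card
    intro T hT
    simp only [mem_filter] at hT
    have := h2 hT.1
    simp only [Q, mem_filter, mem_powersetCard] at this
    refine mem_powersetCard.2 ⟨fun i hi => ?_, this.1.2⟩
    have hi1 := this.1.1 hi
    have hi3 : i ≠ z := by
      rintro rfl
      exact hT.2 hi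
    simp only [mem_low, Fin.ext_iff, hz, ne_eq] at hi1 hi3 ⊢
    omega
  have e4 := card_filter_add_card_filter_not (s := C) (p := (z ∈ ·))
  -- count A
  have e5 := card_not_subset (low m 2) (A ∪ powersetCard (k-1) (insert z (low m 3)))
    (a := k - 1) (by
      intro S hS
      rcases mem_union.1 hS with h | h
      · exact hA S h
      · exact (mem_powersetCard.1 h).2)
  have e6 : (A ∪ powersetCard (k-1) (insert z (low m 3))).filter (· ⊆ low m 2) ⊆
      powersetCard (k - 1) (low m 3) := by
    intro S hS
    simp only [mem_filter, mem_union, mem_powersetCard] at hS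
    obtain ⟨h | h, h'⟩ := hS
    · exact absurd (mem_filter.2 ⟨h, h'⟩) (by rw [e1]; simp)
    · rw [subset_insert_iff_of_notMem (fun hh => hz2 (h' hh))] at h
      exact mem_powersetCard.2 h
  have e6 := card_le_card e6
  have e7 := card_union_add_card_inter A (powersetCard (k-1) (insert z (low m 3)))
  have e8 : A ∩ powersetCard (k-1) (insert z (low m 3)) ⊆
      A.filter (fun S => z ∈ S ∧ S ⊆ insert z (low m 3)) := by
    intro S hS
    simp only [mem_inter, mem_powersetCard] at hS
    refine mem_filter.2 ⟨hS.1, ?_, hS.2.1⟩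
    by_contra hzS
    have hh := hS.2.1
    rw [subset_insert_iff_of_notMem hzS] at hh
    have : S ∈ A.filter (· ⊆ low m 2) := mem_filter.2 ⟨hS.1, hh.trans (fun i hi => by
      simp only [mem_low] at hi ⊢; omega)⟩
    rw [e1] at this
    simp at this
  have e8 := card_le_card e8
  simp only [card_powersetCard, card_insert_of_notMem hzn, card_low] at e5 e6 e7
  have e9 : (m - 3 + 1).choose (k - 1) = (m - 3).choose (k - 2) + (m - 3).choose (k - 1) := by
    obtain ⟨b, hb⟩ : ∃ b, k - 1 = b + 1 := ⟨k - 2, by omega⟩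
    rw [hb, show k - 2 = b by omega, Nat.choose_succ_succ]
  omega

open Finset.Colex in
lemma exists_initSeg_card (m r b : ℕ) (hb : b ≤ m.choose r) :
    ∃ C : Finset (Finset (Fin m)), IsInitSeg C r ∧ #C = b := by
  induction b with
  | zero => exact ⟨∅, isInitSeg_empty, rfl⟩
  | succ b ih =>
    obtain ⟨C, hC, hCb⟩ := ih (by omega)
    have hsub : C ⊆ powersetCard r univ := fun S hS => mem_powersetCard.2 ⟨subset_univ _, hC.1 hS⟩
    have hne : (powersetCard r (univ : Finset (Fin m)) \ C).Nonempty := by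
      rw [← card_pos, card_sdiff_of_subset hsub, card_powersetCard, card_univ, Fintype.card_fin]
      omega
    obtain ⟨S, hS, hmin⟩ := exists_min_image _ (fun S => toColex S) hne
    simp only [mem_sdiff, mem_powersetCard, subset_univ, true_and] at hS hmin
    refine ⟨insert S C, ⟨?_, ?_⟩, by rw [card_insert_of_notMem hS.2, hCb]⟩
    · intro T hT
      rcases mem_insert.1 hT with rfl | h
      · exact hS.1
      · exact hC.1 h
    · intro s t hs ht
      rcases mem_insert.1 hs with rfl | h
      · by_contra hcon
        have := hmin t ⟨ht.2, fun h => hcon (mem_insert_of_mem h)⟩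
        exact absurd ht.1 (not_lt.2 this)
      · exact mem_insert_of_mem (hC.2 h ht)

open Finset.Colex in
lemma cross_to_init (m a b : ℕ) (hab : a + b ≤ m) (A B : Finset (Finset (Fin m)))
    (hA : ∀ S ∈ A, #S = a) (hB : ∀ S ∈ B, #S = b)
    (hX : ∀ S ∈ A, ∀ T ∈ B, (S ∩ T).Nonempty) :
    ∃ A' C : Finset (Finset (Fin m)), IsInitSeg C (m - b) ∧ #C = #B ∧ #A ≤ #A' ∧
      (∀ S ∈ A', #S = a) ∧ ∀ S ∈ A', ∀ T ∈ C, ¬ S ⊆ T := by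
  set Bc := B.image compl with hBc
  have hBcc : #Bc = #B := card_image_of_injective _ compl_injective
  have hsz : (Bc : Set (Finset (Fin m))).Sized (m - b) := by
    intro S hS
    rw [mem_coe, hBc, mem_image] at hS
    obtain ⟨T, hT, rfl⟩ := hS
    rw [card_compl, Fintype.card_fin, hB T hT]
  have hle : #Bc ≤ m.choose (m - b) := by
    have : Bc ⊆ powersetCard (m - b) univ := fun S hS => mem_powersetCard.2 ⟨subset_univ _, hsz hS⟩
    have := card_le_card this
    rwa [card_powersetCard, card_univ, Fintype.card_fin] at this
  obtain ⟨C, hC, hCb⟩ := exists_initSeg_card m (m - b) #Bc hle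
  have kk := iterated_kk (k := m - b - a) hsz hCb.le hC
  have hAsub : A ⊆ powersetCard a univ := fun S hS => mem_powersetCard.2 ⟨subset_univ _, hA S hS⟩
  set sh := Finset.shadow^[m - b - a] C with hsh
  have hshsub : sh ⊆ powersetCard a univ := by
    intro S hS
    rw [hsh, mem_shadow_iterate_iff_exists_mem_card_add] at hS
    obtain ⟨T, hT, -, h⟩ := hS
    have := hC.1 hT
    exact mem_powersetCard.2 ⟨subset_univ _, by omega⟩
  refine ⟨powersetCard a univ \ sh, C, hC, by rw [hCb, hBcc], ?_, ?_, ?_⟩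
  · have hd : Disjoint A (Finset.shadow^[m - b - a] Bc) := by
      rw [disjoint_left]
      intro S hS hS'
      rw [mem_shadow_iterate_iff_exists_mem_card_add] at hS'
      obtain ⟨T, hT, hST, -⟩ := hS'
      rw [hBc, mem_image] at hT
      obtain ⟨T, hT, rfl⟩ := hT
      obtain ⟨i, hi⟩ := hX S hS T hT
      rw [mem_inter] at hi
      exact (mem_compl.1 (hST hi.1)) hi.2
    have hsub : A ∪ (Finset.shadow^[m - b - a] Bc) ⊆ powersetCard a univ := by
      apply union_subset hAsub
      intro S hS
      rw [mem_shadow_iterate_iff_exists_mem_card_add] at hS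
      obtain ⟨T, hT, -, h⟩ := hS
      have := hsz hT
      exact mem_powersetCard.2 ⟨subset_univ _, by omega⟩
    have h1 := card_le_card hsub
    rw [card_union_of_disjoint hd] at h1
    rw [card_sdiff_of_subset hshsub]
    omega
  · intro S hS
    exact (mem_powersetCard.1 (mem_sdiff.1 hS).1).2
  · intro S hS T hT hST
    rw [mem_sdiff, mem_powersetCard] at hS
    apply hS.2
    rw [hsh, mem_shadow_iterate_iff_exists_mem_card_add]
    exact ⟨T, hT, hST, by rw [hC.1 hT, hS.1.2]; omega⟩

open Finset.Colex in
lemma initSeg_low (m r j : ℕ) (hj : 1 ≤ j) (hjm : j ≤ m) : IsInitSeg (powersetCard r (low m j)) r := by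
  refine ⟨fun S hS => (mem_powersetCard.1 hS).2, ?_⟩
  intro s t hs ht
  rw [mem_powersetCard] at hs ⊢
  refine ⟨?_, ht.2⟩
  have := forall_lt_mono (a := (⟨m - j, by omega⟩ : Fin m)) ht.1.le (by
    intro b hb
    have := hs.1 hb
    rw [mem_low] at this
    rw [Fin.lt_def]; simp; omega)
  intro i hi
  have := this i hi
  rw [Fin.lt_def] at this
  rw [mem_low]; simp at this; omega

open Finset.Colex in
lemma initSeg_Q (m r : ℕ) (h : 3 ≤ m) : IsInitSeg (Q m r h) r := by
  refine ⟨fun S hS => (mem_powersetCard.1 (mem_filter.1 hS).1).2, ?_⟩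
  intro s t hs ht
  unfold Q at hs ⊢
  rw [mem_filter] at hs ⊢
  have ht1 := (initSeg_low m r 1 le_rfl (by omega)).2 hs.1 ht
  refine ⟨ht1, ?_⟩
  rintro ⟨h2, h3⟩
  have hs1 := (mem_powersetCard.1 hs.1).1
  have ht1 := (mem_powersetCard.1 ht1).1
  have hle := toColex_le_toColex.1 ht.1.le
  -- helper: an element of `s` at or above `m-3` not in `t` is impossible
  have key : ∀ b : Fin m, b ∈ s → b ∉ t → ¬ (m - 3 ≤ (b : ℕ)) := by
    intro b hb hbt hb3
    have hb1 := hs1 hb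
    rw [mem_low] at hb1
    have : b = ⟨m - 2, by omega⟩ ∨ b = ⟨m - 3, by omega⟩ := by
      simp only [Fin.ext_iff]; omega
    rcases this with hb' | hb'
    · exact hbt (hb' ▸ h2)
    · exact hbt (hb' ▸ h3)
  have k2 : (⟨m - 2, by omega⟩ : Fin m) ∈ s := by
    by_contra hcon
    obtain ⟨b, hb, hbt, hab⟩ := hle h2 hcon
    rw [Fin.le_def] at hab
    exact key b hb hbt (by simp at hab; omega)
  have k3 : (⟨m - 3, by omega⟩ : Fin m) ∈ s := by
    by_contra hcon
    obtain ⟨b, hb, hbt, hab⟩ := hle h3 hcon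
    rw [Fin.le_def] at hab
    exact key b hb hbt (by simp at hab; omega)
  exact hs.2 ⟨k2, k3⟩

lemma card_Q (m r : ℕ) (h : 3 ≤ m) (hr : 1 ≤ r) :
    (m - 2).choose r + (m - 3).choose (r - 1) ≤ #(Q m r h) := by
  set z : Fin m := ⟨m - 2, by omega⟩ with hz
  have hzn : z ∉ low m 3 := by simp only [mem_low, hz]; omega
  have hz2 : z ∉ low m 2 := by simp only [mem_low, hz]; omega
  have hz1 : z ∈ low m 1 := by simp only [mem_low, hz]; omega
  have hw3 : (⟨m - 3, by omega⟩ : Fin m) ∉ low m 3 := by simp only [mem_low]; omega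
  have hwz : (⟨m - 3, by omega⟩ : Fin m) ≠ z := by simp only [hz, ne_eq, Fin.ext_iff]; omega
  have l21 : low m 2 ⊆ low m 1 := fun i hi => by simp only [mem_low] at hi ⊢; omega
  have l31 : low m 3 ⊆ low m 1 := fun i hi => by simp only [mem_low] at hi ⊢; omega
  have c2 : #((powersetCard (r - 1) (low m 3)).image (insert z)) = (m - 3).choose (r - 1) := by
    rw [card_image_of_injOn, card_powersetCard, card_low]
    intro S hS T hT hh
    rw [mem_coe, mem_powersetCard] at hS hT
    rw [← erase_insert (fun hh => hzn (hS.1 hh)), ← erase_insert (fun hh => hzn (hT.1 hh)), hh]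
  rw [← c2, ← card_low m 2, ← card_powersetCard, ← card_union_of_disjoint]
  · apply card_le_card
    intro S hS
    rw [mem_union, mem_image] at hS
    unfold Q
    rw [mem_filter, mem_powersetCard]
    rcases hS with hS | ⟨T, hT, rfl⟩
    · rw [mem_powersetCard] at hS
      exact ⟨⟨hS.1.trans l21, hS.2⟩, fun hh => hz2 (hS.1 hh.1)⟩
    · rw [mem_powersetCard] at hT
      refine ⟨⟨insert_subset hz1 (hT.1.trans l31), ?_⟩, ?_⟩
      · rw [card_insert_of_notMem (fun hh => hzn (hT.1 hh)), hT.2]; omega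
      · rintro ⟨-, hh⟩
        rcases mem_insert.1 hh with hh | hh
        · exact hwz hh
        · exact hw3 (hT.1 hh)
  · rw [disjoint_left]
    intro S hS hS'
    rw [mem_image] at hS'
    obtain ⟨T, hT, rfl⟩ := hS'
    exact hz2 ((mem_powersetCard.1 hS).1 (mem_insert_self _ _))

open Finset.Colex in
lemma initSeg_sub {m r : ℕ} {C D : Finset (Finset (Fin m))} (hC : IsInitSeg C r)
    (hD : IsInitSeg D r) (h : #C ≤ #D) : C ⊆ D := by
  rcases hC.total hD with h' | h'
  · exact h'
  · exact (eq_of_subset_of_card_le h' h).symm.subset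

lemma window1 (m k u : ℕ) (hm : 2 * k ≤ m) (hu : 2 ≤ u) (huk : u ≤ k)
    (A B : Finset (Finset (Fin m))) (hA : ∀ S ∈ A, #S = k - 1) (hB : ∀ T ∈ B, #T = k)
    (hX : ∀ S ∈ A, ∀ T ∈ B, (S ∩ T).Nonempty)
    (h1 : (m - u).choose (m - k) ≤ #B) (h2 : #B ≤ (m - 2).choose (m - k)) :
    #A + #B + (m - u).choose (k - 1) ≤ m.choose (k - 1) + (m - u).choose (m - k) := by
  obtain ⟨A', C, hC, hCB, hAA, hA', hne⟩ := cross_to_init m (k-1) k (by omega) A B hA hB hX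
  have := window1' m k u hm hu huk A' C hA' (fun T hT => hC.1 hT) hne
    (initSeg_sub (initSeg_low m _ u (by omega) (by omega)) hC
      (by rw [card_powersetCard, card_low]; omega))
    (initSeg_sub hC (initSeg_low m _ 2 (by omega) (by omega))
      (by rw [card_powersetCard, card_low]; omega))
  omega

lemma window2 (m k : ℕ) (hm : 2 * k ≤ m) (hk : 3 ≤ k)
    (A B : Finset (Finset (Fin m))) (hA : ∀ S ∈ A, #S = k - 1) (hB : ∀ T ∈ B, #T = k)
    (hX : ∀ S ∈ A, ∀ T ∈ B, (S ∩ T).Nonempty)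
    (h1 : (m - 2).choose (m - k) ≤ #B)
    (h2 : #B ≤ (m - 2).choose (m - k) + (m - 3).choose (m - k - 1)) :
    #A + #B + (m - 2).choose (k - 1) ≤ m.choose (k - 1) + (m - 2).choose (m - k) := by
  obtain ⟨A', C, hC, hCB, hAA, hA', hne⟩ := cross_to_init m (k-1) k (by omega) A B hA hB hX
  have hQ := card_Q m (m - k) (by omega) (by omega)
  have := window2' m k hm hk A' C hA' (fun T hT => hC.1 hT) hne
    (initSeg_sub (initSeg_low m _ 2 (by omega) (by omega)) hC
      (by rw [card_powersetCard, card_low]; omega))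
    (initSeg_sub hC (initSeg_Q m _ (by omega)) (by omega))
  omega

lemma window3 (m a : ℕ) (hm : 2 * a ≤ m) (ha : 1 ≤ a)
    (A B : Finset (Finset (Fin m))) (hA : ∀ S ∈ A, #S = a) (hB : ∀ T ∈ B, #T = a)
    (hX : ∀ S ∈ A, ∀ T ∈ B, (S ∩ T).Nonempty)
    (h1 : (m - 1).choose (a - 1) ≤ #B) : #A ≤ (m - 1).choose (a - 1) := by
  obtain ⟨A', C, hC, hCB, hAA, hA', hne⟩ := cross_to_init m a a (by omega) A B hA hB hX
  have e0 : (m - 1).choose (a - 1) = (m - 1).choose (m - a) := by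
    rw [← Nat.choose_symm (by omega : a - 1 ≤ m - 1)]; congr 1; omega
  have := empty_of_full m a (m-a) (low m 1) (by rw [card_low]; omega) (by omega) A' C hA' hne
    (initSeg_sub (initSeg_low m _ 1 (by omega) (by omega)) hC
      (by rw [card_powersetCard, card_low]; omega))
  have h2 := card_not_subset (low m 1) A' hA'
  rw [this, card_low, card_empty] at h2
  have h3 : m.choose a = (m - 1).choose (a - 1) + (m - 1).choose a := by
    obtain ⟨m, rfl⟩ : ∃ m', m = m' + 1 := ⟨m - 1, by omega⟩
    obtain ⟨a, rfl⟩ : ∃ m', a = m' + 1 := ⟨a - 1, by omega⟩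
    exact Nat.choose_succ_succ _ _
  omega

lemma transport {α : Type*} [DecidableEq α] (W : Finset α) (m : ℕ) (hW : #W = m) :
    ∃ φ : Finset α → Finset (Fin m), (∀ S, S ⊆ W → #(φ S) = #S) ∧
      (∀ S T, S ⊆ W → T ⊆ W → φ S = φ T → S = T) ∧
      (∀ S T, S ⊆ W → (S ∩ T).Nonempty → (φ S ∩ φ T).Nonempty) := by
  subst hW
  set e : Fin #W → α := fun i => (W.equivFin.symm i : α) with he
  have hinj : Function.Injective e := fun i j h => by
    simpa [he, Subtype.ext_iff] using h
  have hsurj : ∀ y ∈ W, ∃ i, e i = y := fun y hy => ⟨W.equivFin ⟨y, hy⟩, by simp [he]⟩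
  set φ : Finset α → Finset (Fin #W) := fun S => univ.filter (fun i => e i ∈ S) with hφ
  have him : ∀ S, S ⊆ W → (φ S).image e = S := by
    intro S hS
    ext y
    simp only [hφ, mem_image, mem_filter, mem_univ, true_and]
    constructor
    · rintro ⟨i, hi, rfl⟩; exact hi
    · intro hy
      obtain ⟨i, rfl⟩ := hsurj y (hS hy)
      exact ⟨i, hy, rfl⟩
  refine ⟨φ, ?_, ?_, ?_⟩
  · intro S hS
    conv_rhs => rw [← him S hS]
    rw [card_image_of_injective _ hinj]
  · intro S T hS hT h
    rw [← him S hS, ← him T hT, h]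
  · rintro S T hS ⟨y, hy⟩
    rw [mem_inter] at hy
    obtain ⟨i, rfl⟩ := hsurj y (hS hy.1)
    exact ⟨i, by simp [hφ, hy.1, hy.2]⟩

/-- transport of two cross-intersecting families on a ground set of size `m` to `Fin m` -/
lemma transport2 {α : Type*} [DecidableEq α] (W : Finset α) (m a b : ℕ) (hW : #W = m)
    (A B : Finset (Finset α)) (hA : ∀ S ∈ A, S ⊆ W ∧ #S = a) (hB : ∀ S ∈ B, S ⊆ W ∧ #S = b)
    (hX : ∀ S ∈ A, ∀ T ∈ B, (S ∩ T).Nonempty) :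
    ∃ A' B' : Finset (Finset (Fin m)), #A' = #A ∧ #B' = #B ∧ (∀ S ∈ A', #S = a) ∧
      (∀ S ∈ B', #S = b) ∧ ∀ S ∈ A', ∀ T ∈ B', (S ∩ T).Nonempty := by
  obtain ⟨φ, h1, h2, h3⟩ := transport W m hW
  refine ⟨A.image φ, B.image φ, card_image_of_injOn ?_, card_image_of_injOn ?_, ?_, ?_, ?_⟩
  · exact fun S hS T hT h => h2 S T (hA S hS).1 (hA T hT).1 h
  · exact fun S hS T hT h => h2 S T (hB S hS).1 (hB T hT).1 h
  · intro S hS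
    obtain ⟨S, hS', rfl⟩ := mem_image.1 hS
    rw [h1 S (hA S hS').1, (hA S hS').2]
  · intro S hS
    obtain ⟨S, hS', rfl⟩ := mem_image.1 hS
    rw [h1 S (hB S hS').1, (hB S hS').2]
  · intro S hS T hT
    obtain ⟨S, hS', rfl⟩ := mem_image.1 hS
    obtain ⟨T, hT', rfl⟩ := mem_image.1 hT
    exact h3 S T (hA S hS').1 (hX S hS' T hT')

lemma choose_le_of (N s l : ℕ) (hls : l ≤ s) (hN : N ≤ s + l) : N.choose s ≤ N.choose l := by
  have := hall (univ : Finset (Fin N)) (powersetCard s univ) ∅ s l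
    (fun T hT => mem_powersetCard.1 hT) (by simp) hls (by simpa using hN) (by simp)
  simpa using this

lemma card_image_erase {α : Type*} [DecidableEq α] (z : α) (D : Finset (Finset α))
    (hD : ∀ T ∈ D, z ∈ T) : #(D.image (fun T => T.erase z)) = #D := by
  apply card_image_of_injOn
  intro T hT T' hT' h
  dsimp only at h
  rw [← insert_erase (hD T hT), ← insert_erase (hD T' hT'), h]

/-- link and co-link of `x`, transported to `Fin (n-1)` -/
lemma link (n k : ℕ) (F : Finset (Finset (Fin n))) (x : Fin n)
    (hcard : ∀ A ∈ F, #A = k) (hint : ∀ A ∈ F, ∀ B ∈ F, (A ∩ B).Nonempty) :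
    ∃ A B : Finset (Finset (Fin (n - 1))), #A + #B = #F ∧ #B = #(F.filter (x ∉ ·)) ∧
      (∀ S ∈ A, #S = k - 1) ∧ (∀ S ∈ B, #S = k) ∧ ∀ S ∈ A, ∀ T ∈ B, (S ∩ T).Nonempty := by
  obtain ⟨A, B, h1, h2, h3, h4, h5⟩ := transport2 (univ.erase x) (n - 1) (k - 1) k
    (by rw [card_erase_of_mem (mem_univ _), card_univ, Fintype.card_fin])
    ((F.filter (x ∈ ·)).image (fun T => T.erase x)) (F.filter (x ∉ ·))
    (by
      intro S hS
      obtain ⟨S, hS', rfl⟩ := mem_image.1 hS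
      rw [mem_filter] at hS'
      exact ⟨erase_subset_erase _ (subset_univ _), by
        rw [card_erase_of_mem hS'.2, hcard S hS'.1]⟩)
    (by
      intro S hS
      rw [mem_filter] at hS
      exact ⟨subset_erase.2 ⟨subset_univ _, hS.2⟩, hcard S hS.1⟩)
    (by
      intro S hS T hT
      obtain ⟨S, hS', rfl⟩ := mem_image.1 hS
      rw [mem_filter] at hS' hT
      obtain ⟨y, hy⟩ := hint S hS'.1 T hT.1
      rw [mem_inter] at hy
      refine ⟨y, mem_inter.2 ⟨mem_erase.2 ⟨?_, hy.1⟩, hy.2⟩⟩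
      rintro rfl
      exact hT.2 hy.2)
  refine ⟨A, B, ?_, h2, h3, h4, h5⟩
  rw [h1, h2, card_image_erase x _ (fun T hT => (mem_filter.1 hT).2)]
  exact card_filter_add_card_filter_not (s := F) (p := (x ∈ ·))

lemma two_links (n k : ℕ) (hk : 3 ≤ k) (hn : 2 * k < n) (F : Finset (Finset (Fin n)))
    (x y : Fin n) (hxy : x ≠ y)
    (hcard : ∀ A ∈ F, #A = k) (hint : ∀ A ∈ F, ∀ B ∈ F, (A ∩ B).Nonempty)
    (hdeg : #(F.filter (fun S => y ∈ S ∧ x ∉ S)) ≤ #(F.filter (fun S => x ∈ S ∧ y ∉ S))) :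
    #(F.filter (fun S => y ∈ S ∧ x ∉ S)) ≤ (n - 3).choose (k - 2) := by
  have aux : ∀ x y : Fin n, x ≠ y →
      ∀ S ∈ (F.filter (fun S => x ∈ S ∧ y ∉ S)).image (fun T => T.erase x),
      S ⊆ univ \ {x, y} ∧ #S = k - 1 := by
    intro x y hxy S hS
    obtain ⟨S, hS', rfl⟩ := mem_image.1 hS
    rw [mem_filter] at hS'
    refine ⟨?_, by rw [card_erase_of_mem hS'.2.1, hcard S hS'.1]⟩
    intro i hi
    rw [mem_erase] at hi
    simp only [mem_sdiff, mem_univ, true_and, mem_insert, mem_singleton, not_or]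
    refine ⟨hi.1, ?_⟩
    rintro rfl
    exact hS'.2.2 hi.2
  obtain ⟨A, B, h1, h2, h3, h4, h5⟩ := transport2 (univ \ {x, y}) (n - 2) (k - 1) (k - 1)
    (by rw [card_sdiff_of_subset (subset_univ _), card_univ, Fintype.card_fin, card_pair hxy])
    ((F.filter (fun S => y ∈ S ∧ x ∉ S)).image (fun T => T.erase y))
    ((F.filter (fun S => x ∈ S ∧ y ∉ S)).image (fun T => T.erase x))
    (by
      intro S hS
      rw [pair_comm]
      exact aux y x hxy.symm S hS)
    (aux x y hxy)
    (by
      intro S hS T hT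
      obtain ⟨S, hS', rfl⟩ := mem_image.1 hS
      obtain ⟨T, hT', rfl⟩ := mem_image.1 hT
      rw [mem_filter] at hS' hT'
      obtain ⟨z, hz⟩ := hint S hS'.1 T hT'.1
      rw [mem_inter] at hz
      refine ⟨z, mem_inter.2 ⟨mem_erase.2 ⟨?_, hz.1⟩, mem_erase.2 ⟨?_, hz.2⟩⟩⟩
      · rintro rfl
        exact hT'.2.2 hz.2
      · rintro rfl
        exact hS'.2.2 hz.1)
  rw [card_image_erase _ _ (fun T hT => (mem_filter.1 hT).2.1)] at h1 h2
  by_contra hcon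
  have := window3 (n - 2) (k - 1) (by omega) (by omega) A B h3 h4 h5
    (by rw [show n - 2 - 1 = n - 3 by omega, show k - 1 - 1 = k - 2 by omega]; omega)
  rw [show n - 2 - 1 = n - 3 by omega, show k - 1 - 1 = k - 2 by omega] at this
  omega

def Stable {n : ℕ} (u v : Finset (Fin n)) (F : Finset (Finset (Fin n))) : Prop :=
  ∀ S ∈ F, v ⊆ S → Disjoint u S → (S ∪ u) \ v ∈ F

lemma compress_inter {n : ℕ} (F : Finset (Finset (Fin n))) (x : Fin n) (u v : Finset (Fin n))
    (hxu : x ∈ u) (huv : #u = #v) (hdis : Disjoint u v)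
    (hint : ∀ A ∈ F, ∀ B ∈ F, (A ∩ B).Nonempty)
    (hst : ∀ u' v' : Finset (Fin n), x ∈ u' → #u' = #v' → Disjoint u' v' → #u' < #u →
      Stable u' v' F) :
    ∀ A ∈ UV.compression u v F, ∀ B ∈ UV.compression u v F, (A ∩ B).Nonempty := by
  have main : ∀ S ∈ UV.compression u v F, S ∉ F → ∀ T ∈ UV.compression u v F, T ∈ F →
      (S ∩ T).Nonempty := by
    intro S hS hSF T hT hTF
    have huS : u ⊆ S := UV.le_of_mem_compression_of_notMem hS hSF
    have hvS : Disjoint v S := UV.disjoint_of_mem_compression_of_notMem hS hSF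
    have hA : (S ∪ v) \ u ∈ F := UV.sup_sdiff_mem_of_mem_compression_of_notMem hS hSF
    by_contra hcon
    rw [not_nonempty_iff_eq_empty, ← disjoint_iff_inter_eq_empty, disjoint_left] at hcon
    have huT : Disjoint u T := disjoint_left.2 (fun i hi => hcon (huS hi))
    by_cases hvT : v ⊆ T
    · have hT' : (T ∪ u) \ v ∈ F := UV.sup_sdiff_mem_of_mem_compression hT hvT huT
      obtain ⟨y, hy⟩ := hint _ hA _ hT'
      simp only [mem_inter, mem_sdiff, mem_union] at hy
      have := @hcon y
      tauto
    · have hWc : #(v ∩ T) < #v := by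
        apply card_lt_card
        refine ⟨inter_subset_left, fun h => hvT (h.trans inter_subset_right)⟩
      have hWne : (v ∩ T).Nonempty := by
        obtain ⟨y, hy⟩ := hint _ hA _ hTF
        simp only [mem_inter, mem_sdiff, mem_union] at hy
        refine ⟨y, ?_⟩
        rw [mem_inter]
        have := @hcon y
        tauto
      obtain ⟨u', hxu', hu'u, hu'⟩ := exists_subsuperset_card_eq (n := #(v ∩ T))
        (singleton_subset_iff.2 hxu) (by rw [card_singleton]; exact hWne.card_pos) (by omega)
      have hst' := hst u' (v ∩ T) (singleton_subset_iff.1 hxu') hu'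
        (disjoint_of_subset_left hu'u (disjoint_of_subset_right inter_subset_left hdis))
        (by omega) T hTF inter_subset_right (disjoint_of_subset_left hu'u huT)
      obtain ⟨y, hy⟩ := hint _ hA _ hst'
      simp only [mem_inter, mem_sdiff, mem_union] at hy
      have h1 := @hcon y
      have h2 := @hu'u y
      tauto
  intro A hA B hB
  by_cases hAF : A ∈ F <;> by_cases hBF : B ∈ F
  · exact hint A hAF B hBF
  · rw [inter_comm]; exact main B hB hBF A hA hAF
  · exact main A hA hAF B hB hBF
  · exact ⟨x, mem_inter.2 ⟨UV.le_of_mem_compression_of_notMem hA hAF hxu,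
      UV.le_of_mem_compression_of_notMem hB hBF hxu⟩⟩

lemma card_moved (n k : ℕ) (F : Finset (Finset (Fin n)))
    (hcard : ∀ A ∈ F, #A = k) (u v : Finset (Fin n)) (hu : 2 ≤ #u) (hv : 2 ≤ #v)
    (hdis : Disjoint u v) :
    #(F.filter (fun S => v ⊆ S ∧ Disjoint u S)) ≤ (n - 4).choose (k - 2) := by
  obtain ⟨u2, hu2, hu2c⟩ := exists_subset_card_eq hu
  obtain ⟨v2, hv2, hv2c⟩ := exists_subset_card_eq hv
  have hd2 : Disjoint u2 v2 := disjoint_of_subset_left hu2 (disjoint_of_subset_right hv2 hdis)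
  have : #(F.filter (fun S => v ⊆ S ∧ Disjoint u S)) ≤
      #(powersetCard (k - 2) (univ \ (u2 ∪ v2))) := by
    apply card_le_card_of_injOn (fun S => S \ v2)
    · intro S hS
      rw [mem_coe, mem_filter] at hS
      rw [mem_coe, mem_powersetCard]
      refine ⟨?_, by rw [card_sdiff_of_subset (hv2.trans hS.2.1), hcard S hS.1, hv2c]⟩
      intro i hi
      rw [mem_sdiff] at hi
      simp only [mem_sdiff, mem_univ, true_and, mem_union, not_or]
      exact ⟨fun h => (disjoint_left.1 hS.2.2 (hu2 h)) hi.1, hi.2⟩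
    · intro S hS T hT h
      rw [mem_coe, mem_filter] at hS hT
      dsimp only at h
      rw [← sdiff_union_of_subset (hv2.trans hS.2.1), ← sdiff_union_of_subset (hv2.trans hT.2.1), h]
  rwa [card_powersetCard, card_sdiff_of_subset (subset_univ _), card_univ, Fintype.card_fin,
    card_union_of_disjoint hd2, hu2c, hv2c] at this

lemma path (n k : ℕ) (hk : 3 ≤ k) (hn : 2 * k < n) (x : Fin n) (g : ℕ) :
    ∀ F : Finset (Finset (Fin n)), (∀ A ∈ F, #A = k) →
    (∀ A ∈ F, ∀ B ∈ F, (A ∩ B).Nonempty) → #(F.filter (x ∉ ·)) = g →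
    (∀ y, y ≠ x →
      #(F.filter (fun S => y ∈ S ∧ x ∉ S)) ≤ #(F.filter (fun S => x ∈ S ∧ y ∉ S))) →
    (n - 4).choose (n - 1 - k) ≤ g →
    #F + (n - 4).choose (k - 1) ≤ (n - 1).choose (k - 1) + (n - 4).choose (n - 1 - k) := by
  classical
  have n1 : (n - 4).choose (n - 1 - k) ≤ (n - 4).choose (k - 2) :=
    choose_le_of _ _ _ (by omega) (by omega)
  have n2 : (n - 4).choose (n - 1 - k - 1) = (n - 4).choose (k - 2) := by
    rw [← Nat.choose_symm (by omega : k - 2 ≤ n - 4)]; congr 1; omega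
  have n3 : (n - 3).choose (n - 1 - k) = (n - 4).choose (k - 2) + (n - 4).choose (n - 1 - k) := by
    rw [← n2]
    obtain ⟨a, ha⟩ : ∃ a, n - 3 = a + 1 := ⟨n - 4, by omega⟩
    obtain ⟨b, hb⟩ : ∃ b, n - 1 - k = b + 1 := ⟨n - 1 - k - 1, by omega⟩
    rw [ha, hb, show n - 4 = a by omega, Nat.choose_succ_succ]; simp
  have n4 : (n - 3).choose (k - 1) = (n - 4).choose (k - 2) + (n - 4).choose (k - 1) := by
    obtain ⟨a, ha⟩ : ∃ a, n - 3 = a + 1 := ⟨n - 4, by omega⟩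
    obtain ⟨b, hb⟩ : ∃ b, k - 1 = b + 1 := ⟨k - 2, by omega⟩
    rw [ha, hb, show n - 4 = a by omega, show k - 2 = b by omega, Nat.choose_succ_succ]
  have n5 : (n - 3).choose (k - 2) = (n - 3).choose (n - 1 - k) := by
    rw [← Nat.choose_symm (by omega : k - 2 ≤ n - 3)]; congr 1; omega
  induction g using Nat.strong_induction_on with
  | _ g ih =>
  intro F hcard hint hg hdeg hL
  obtain ⟨A, B, hAB, hB, hAc, hBc, hX⟩ := link n k F x hcard hint
  by_cases c1 : g ≤ (n - 3).choose (n - 1 - k)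
  · have := window1 (n - 1) k 3 (by omega) (by omega) hk A B hAc hBc hX
      (by rw [show n - 1 - 3 = n - 4 by omega]; omega)
      (by rw [show n - 1 - 2 = n - 3 by omega]; omega)
    rw [show n - 1 - 3 = n - 4 by omega] at this
    omega
  by_cases c2 : g ≤ (n - 3).choose (n - 1 - k) + (n - 4).choose (k - 2)
  · have := window2 (n - 1) k (by omega) hk A B hAc hBc hX
      (by rw [show n - 1 - 2 = n - 3 by omega]; omega)
      (by rw [show n - 1 - 2 = n - 3 by omega, show n - 1 - 3 = n - 4 by omega]; omega)
    rw [show n - 1 - 2 = n - 3 by omega] at this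
    omega
  -- existence of a useful compression
  have hex : ∃ r, ∃ u v : Finset (Fin n), #u = r ∧ #u = #v ∧ x ∈ u ∧ Disjoint u v ∧
      ¬ Stable u v F := by
    have : 0 < #(F.filter (x ∉ ·)) := by omega
    obtain ⟨S, hS⟩ := card_pos.1 this
    rw [mem_filter] at hS
    obtain ⟨u, hxu, huS, hu⟩ := exists_subsuperset_card_eq (n := k) (s := {x}) (t := Sᶜ)
      (by simpa using hS.2) (by rw [card_singleton]; omega)
      (by rw [card_compl, Fintype.card_fin, hcard S hS.1]; omega)
    have hdis : Disjoint u S := disjoint_left.2 (fun i hi => mem_compl.1 (huS hi))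
    refine ⟨k, u, S, hu, by rw [hu, hcard S hS.1], singleton_subset_iff.1 hxu, hdis, ?_⟩
    intro hst
    have := hst S hS.1 le_rfl hdis
    obtain ⟨y, hy⟩ := hint _ this _ hS.1
    simp only [mem_inter, mem_sdiff, mem_union] at hy
    tauto
  obtain ⟨u, v, hur, huv, hxu, hdis, hns⟩ := Nat.find_spec hex
  have hmin : ∀ u' v' : Finset (Fin n), x ∈ u' → #u' = #v' → Disjoint u' v' → #u' < #u →
      Stable u' v' F := by
    intro u' v' h1 h2 h3 h4
    by_contra hcon
    exact Nat.find_min hex (hur ▸ h4) ⟨u', v', rfl, h2, h1, h3, hcon⟩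
  have hint' := compress_inter F x u v hxu huv hdis hint hmin
  set F' := UV.compression u v F with hF'
  have f1 : ∀ S ∈ F', S ∉ F → x ∈ S := fun S hS hSF =>
    UV.le_of_mem_compression_of_notMem hS hSF hxu
  have f2 : ∀ S ∈ F, ¬ (v ⊆ S ∧ Disjoint u S) → S ∈ F' := by
    intro S hS hh
    rw [hF', UV.mem_compression]
    left
    refine ⟨hS, ?_⟩
    unfold UV.compress
    rw [if_neg (fun h => hh ⟨h.2, h.1⟩)]
    exact hS
  have f3 : ∀ S ∈ F, x ∈ S → S ∈ F' := fun S hS hxS =>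
    f2 S hS (fun h => (disjoint_left.1 h.2 hxu) hxS)
  have hcard' : ∀ A ∈ F', #A = k := by
    have : (F : Set (Finset (Fin n))).Sized k := fun S hS => hcard S hS
    have := this.uvCompression huv
    exact fun S hS => this hS
  have hlt : #(F'.filter (x ∉ ·)) < g := by
    rw [← hg]
    apply card_lt_card
    constructor
    · intro S hS
      rw [mem_filter] at hS ⊢
      refine ⟨?_, hS.2⟩
      by_contra h
      exact hS.2 (f1 S hS.1 h)
    · intro hsub
      apply hns
      intro S hS hvS huS
      have : S ∈ F'.filter (x ∉ ·) := hsub (mem_filter.2 ⟨hS, disjoint_left.1 huS hxu⟩)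
      exact UV.sup_sdiff_mem_of_mem_compression (mem_filter.1 this).1 hvS huS
  have hdeg' : ∀ y, y ≠ x →
      #(F'.filter (fun S => y ∈ S ∧ x ∉ S)) ≤ #(F'.filter (fun S => x ∈ S ∧ y ∉ S)) := by
    intro y hy
    refine le_trans (card_le_card ?_) ((hdeg y hy).trans (card_le_card ?_))
    · intro S hS
      rw [mem_filter] at hS ⊢
      refine ⟨?_, hS.2⟩
      by_contra h
      exact hS.2.2 (f1 S hS.1 h)
    · intro S hS
      rw [mem_filter] at hS ⊢
      exact ⟨f3 S hS.1 hS.2.1, hS.2⟩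
  have hL' : (n - 4).choose (n - 1 - k) ≤ #(F'.filter (x ∉ ·)) := by
    by_cases hr : 2 ≤ #u
    · have hD := card_moved n k F hcard u v hr (by omega) hdis
      have : F.filter (x ∉ ·) ⊆ F'.filter (x ∉ ·) ∪ F.filter (fun S => v ⊆ S ∧ Disjoint u S) := by
        intro S hS
        rw [mem_filter] at hS
        rw [mem_union, mem_filter, mem_filter]
        by_cases h : v ⊆ S ∧ Disjoint u S
        · right; exact ⟨hS.1, h⟩
        · left; exact ⟨f2 S hS.1 h, hS.2⟩
      have := (card_le_card this).trans (card_union_le _ _)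
      omega
    · have hu1 : #u = 1 := by
        have := card_pos.2 ⟨x, hxu⟩
        omega
      obtain ⟨y, hy⟩ := card_eq_one.1 (huv ▸ hu1)
      have hyx : y ≠ x := by
        rintro rfl
        exact disjoint_left.1 hdis hxu (by rw [hy]; simp)
      have hY := two_links n k hk hn F x y hyx.symm hcard hint (hdeg y hyx)
      have : F.filter (x ∉ ·) ⊆ F'.filter (x ∉ ·) ∪ F.filter (fun S => y ∈ S ∧ x ∉ S) := by
        intro S hS
        rw [mem_filter] at hS
        rw [mem_union, mem_filter, mem_filter]
        by_cases h : y ∈ S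
        · right; exact ⟨hS.1, h, hS.2⟩
        · left
          refine ⟨f2 S hS.1 ?_, hS.2⟩
          rw [hy, singleton_subset_iff]
          exact fun hh => h hh.1
      have := (card_le_card this).trans (card_union_le _ _)
      omega
  have := ih _ hlt F' hcard' hint' rfl hdeg' hL'
  rwa [hF', UV.card_compression] at this

lemma bound_mono (m k u : ℕ) (hm : 2 * k ≤ m) (hu : 3 ≤ u) (huk : u ≤ k) :
    (m - 3).choose (m - k) + (m - u).choose (k - 1) ≤
      (m - u).choose (m - k) + (m - 3).choose (k - 1) := by
  induction u, hu using Nat.le_induction with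
  | base => rfl
  | succ u hu ih =>
    have h1 := ih (by omega)
    have h2 : (m - (u + 1)).choose (m - k - 1) ≤ (m - (u + 1)).choose (k - 2) :=
      choose_le_of _ _ _ (by omega) (by omega)
    obtain ⟨a, ha⟩ : ∃ a, m - u = a + 1 := ⟨m - u - 1, by omega⟩
    obtain ⟨b, hb⟩ : ∃ b, k - 1 = b + 1 := ⟨k - 2, by omega⟩
    obtain ⟨c, hc⟩ : ∃ c, m - k = c + 1 := ⟨m - k - 1, by omega⟩
    have ha' : m - (u + 1) = a := by omega
    have hb' : k - 2 = b := by omega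
    rw [ha, hb, hc, Nat.choose_succ_succ, Nat.choose_succ_succ] at h1
    rw [ha', hb', hc] at h2
    rw [ha', hb, hc]
    simp at h1 h2 ⊢
    omega

end KZ

theorem KZ_diversity (n k u : ℕ) (hk : 0 < k) (hn : 2 * k < n) (hu : 3 ≤ u) (huk : u ≤ k)
    (F : Finset (Finset (Fin n)))
    (hcard : ∀ A ∈ F, A.card = k)
    (hint : ∀ A ∈ F, ∀ B ∈ F, (A ∩ B).Nonempty)
    (hdiv : (n - u - 1).choose (n - k - 1) ≤
      F.card - Finset.univ.sup (fun i : Fin n => (F.filter (fun A => i ∈ A)).card)) :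
    (F.card : ℤ) ≤ ((n - 1).choose (k - 1) : ℤ) + ((n - u - 1).choose (n - k - 1) : ℤ)
      - ((n - u - 1).choose (k - 1) : ℤ) := by
  suffices h : F.card + (n - u - 1).choose (k - 1) ≤
      (n - 1).choose (k - 1) + (n - u - 1).choose (n - k - 1) by omega
  obtain ⟨x, -, hx⟩ := Finset.exists_max_image (Finset.univ : Finset (Fin n))
    (fun i => (F.filter (fun A => i ∈ A)).card) ⟨⟨0, by omega⟩, Finset.mem_univ _⟩
  have hsup : Finset.univ.sup (fun i : Fin n => (F.filter (fun A => i ∈ A)).card) =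
      (F.filter (fun A => x ∈ A)).card :=
    le_antisymm (Finset.sup_le hx)
      (Finset.le_sup (f := fun i : Fin n => (F.filter (fun A => i ∈ A)).card) (Finset.mem_univ x))
  rw [hsup] at hdiv
  have hsplit := Finset.card_filter_add_card_filter_not (s := F) (p := (fun A => x ∈ A))
  rw [show n - u - 1 = n - 1 - u by omega, show n - k - 1 = n - 1 - k by omega] at *
  by_cases c1 : (F.filter (fun A => x ∉ A)).card ≤ (n - 3).choose (n - 1 - k)
  · obtain ⟨A, B, hAB, hB, hAc, hBc, hX⟩ := KZ.link n k F x hcard hint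
    have := KZ.window1 (n - 1) k u (by omega) (by omega) huk A B hAc hBc hX
      (by omega) (by rw [show n - 1 - 2 = n - 3 by omega]; omega)
    omega
  · have hb := KZ.bound_mono (n - 1) k u (by omega) hu huk
    have hle : (n - 4).choose (n - 1 - k) ≤ (n - 3).choose (n - 1 - k) :=
      Nat.choose_le_choose _ (by omega)
    have := KZ.path n k (by omega) hn x _ F hcard hint rfl (by
      intro y _
      have h1 := hx y (Finset.mem_univ y)
      have h2 := Finset.card_filter_add_card_filter_not (s := F.filter (fun A => x ∈ A))
        (p := (fun A => y ∈ A))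
      have h3 := Finset.card_filter_add_card_filter_not (s := F.filter (fun A => y ∈ A))
        (p := (fun A => x ∈ A))
      simp only [Finset.filter_filter] at h2 h3
      have h4 : F.filter (fun a => x ∈ a ∧ y ∈ a) = F.filter (fun a => y ∈ a ∧ x ∈ a) := by
        ext; simp only [Finset.mem_filter]; tauto
      rw [h4] at h2
      omega) (by omega)
    rw [show n - 1 - 3 = n - 4 by omega] at hb
    omega
end
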